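/- arXiv:2404.16694 — 2 statements merged into one kernel-verified Lean document; each statement's English description precedes it below -/
import Mathlib

section
/- Fix an integer r ≥ 2, a real t > 0, reals a < b, a function f that is 2r times continuously differentiable on [a,b], and a constant A > 0. Then there exist B > 0 and h₀ > 0 with the following property. Let a ≤ x_0 < x_1 < … < x_N ≤ b be any grid with mesh size h := max_{1≤k≤N}(x_k − x_{k-1}) ≤ h₀, let i be an index with r ≤ i ≤ N − r + 1, let x* ∈ (x_{i-1}, x_i), and let I^r_0, …, I^r_{r-1} be nonnegative reals satisfying I^r_k ≤ A·h² for all k and |I^r_k − I^r_{k'}| ≤ A·h^{r+1} for all k, k'. Define: p^r_j = Lagrange interpolant of f on {x_{i-r+j}, …, x_{i+j}} for j = 0,…,r−1; for r ≤ l ≤ 2r−2 and 0 ≤ j ≤ 2r−2−l set C^l_{j,j}(x*) = (x* − x_{i-r+j+l+1})/(x_{i-r+j} − x_{i-r+j+l+1}), C^l_{j,j+1}(x*) = 1 − C^l_{j,j}(x*), level-l indicators I^l_{j,j} = I^r_j and I^l_{j,j+1} = I^r_{l-(r-1)+j}, α̃^l_{j,j₁} = C^l_{j,j₁}(x*)/(h²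 + I^l_{j,j₁})^t for j₁ ∈ {j, j+1}, and ω̃^l_{j,j₁} = α̃^l_{j,j₁}/(α̃^l_{j,j} + α̃^l_{j,j+1}); then recursively q^r_j = p^r_j(x*) and q^{l+1}_j = ω̃^l_{j,j}·q^l_j + ω̃^l_{j,j+1}·q^l_{j+1}. Then the progressive WENO value satisfies |q^{2r-1}_0 − f(x*)| ≤ B·h^{2r}. -/
/-- Value at `y` of the Lagrange interpolant of `f` on the nodes `{x k : k ∈ s}`. -/
noncomputable def lagEval (s : Finset ℕ) (x : ℕ → ℝ) (f : ℝ → ℝ) (y : ℝ) : ℝ :=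
  ∑ k ∈ s, f (x k) * ∏ m ∈ s.erase k, (y - x m) / (x k - x m)

/-- Linear Aitken–Neville weight `C^l_{j,j}(x*)` for the stencil starting at `i - r + j`. -/
noncomputable def Cw (x : ℕ → ℝ) (i r : ℕ) (xs : ℝ) (l j : ℕ) : ℝ :=
  (xs - x (i - r + j + l + 1)) / (x (i - r + j) - x (i - r + j + l + 1))

/-- Unnormalized progressive WENO weight `α̃^l_{j,j+v}` (for `v = 0, 1`), with
regularization `ε = h²`, exponent `t`, and level-`l` indicators `I^l_{j,j} = I^r_j`,
`I^l_{j,j+1} = I^r_{l-(r-1)+j}`. -/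
noncomputable def alphaW (x : ℕ → ℝ) (i r : ℕ) (xs h t : ℝ) (I : ℕ → ℝ)
    (l j v : ℕ) : ℝ :=
  (if v = 0 then Cw x i r xs l j else 1 - Cw x i r xs l j) /
    (h ^ 2 + I (if v = 0 then j else l + 1 - r + j)) ^ t

/-! The Aitken–Neville recursion writes the interpolant `p^{l+1}_j` as the combination of `p^l_j`
and `p^l_{j+1}` with the linear weights `C^l`, which lie in `[0, 1]` because `x*` lies in the
central cell. The progressive WENO recursion is the same one with perturbed weights
`ω̃^l ∈ [0, 1]`. Replacing `C^l` by `ω̃^l` changes the result by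
`(ω̃^l - C^l) (p^l_j - p^l_{j+1})`. Here `|ω̃^l - C^l|` is at most the difference of the logarithms
of the two denominators `(h² + I)^t`, which is at most `|t| |I - I'| / h² = O(h^{r-1})`, while
`p^l_j - p^l_{j+1} = O(h^{r+1})` as both interpolate `f` on at least `r + 1` nodes. So each of the
`r - 1` steps costs `O(h^{2r})`; since the weights are convex, these costs only add up, and
`p^{2r-1}_0` itself is `O(h^{2r})`-accurate. -/

open Polynomial in
theorem iteratedDerivWithin_polynomial_eval {s : Set ℝ} (hs : UniqueDiffOn ℝ s) (n : ℕ)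
    (p : ℝ[X]) {y : ℝ} (hy : y ∈ s) :
    iteratedDerivWithin n (fun z => p.eval z) s y = (derivative^[n] p).eval y := by
  induction n generalizing p with
  | zero => simp
  | succ n ih =>
    rw [iteratedDerivWithin_succ', Function.iterate_succ_apply, ← ih]
    exact iteratedDerivWithin_congr (fun z hz => p.derivWithin (hs z hz)) hy

theorem exists_iteratedDerivWithin_eq_zero {a b : ℝ} (hab : a < b) {n : ℕ} {g : ℝ → ℝ}
    (hg : ContDiffOn ℝ n g (Set.Icc a b)) {z : Fin (n + 1) → ℝ} (hz : StrictMono z)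
    (hmem : ∀ k, z k ∈ Set.Icc a b) (h0 : ∀ k, g (z k) = 0) :
    ∃ ξ ∈ Set.Icc a b, iteratedDerivWithin n g (Set.Icc a b) ξ = 0 := by
  induction n generalizing g with
  | zero => exact ⟨z 0, hmem 0, by simpa using h0 0⟩
  | succ n ih =>
    have rolle : ∀ k : Fin (n + 1), ∃ c ∈ Set.Ioo (z k.castSucc) (z k.succ), deriv g c = 0 :=
      fun k => exists_deriv_eq_zero (hz k.castSucc_lt_succ)
        (hg.continuousOn.mono (Set.Icc_subset_Icc (hmem _).1 (hmem _).2)) (by rw [h0, h0])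
    choose c hc hc0 using rolle
    have hcI : ∀ k, c k ∈ Set.Ioo a b := fun k =>
      ⟨(hmem _).1.trans_lt (hc k).1, (hc k).2.trans_le (hmem _).2⟩
    have hmono : StrictMono c := fun k m hkm =>
      (hc k).2.trans_le ((hz.monotone (Fin.succ_le_castSucc_iff.mpr hkm)).trans (hc m).1.le)
    rw [iteratedDerivWithin_succ']
    refine ih (hg.derivWithin (uniqueDiffOn_Icc hab) (by norm_cast)) hmono
      (fun k => Set.Ioo_subset_Icc_self (hcI k)) (fun k => ?_)
    rw [derivWithin_of_mem_nhds (Icc_mem_nhds (hcI k).1 (hcI k).2), hc0]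

theorem exists_forall_abs_iteratedDerivWithin_le {a b : ℝ} (hab : a < b) {f : ℝ → ℝ} {m : ℕ}
    (hf : ContDiffOn ℝ m f (Set.Icc a b)) :
    ∃ M > 0, ∀ n ≤ m, ∀ ξ ∈ Set.Icc a b, |iteratedDerivWithin n f (Set.Icc a b) ξ| ≤ M := by
  have hbound : ∀ n ∈ Set.Iic m, ∀ᶠ M in Filter.atTop,
      ∀ ξ ∈ Set.Icc a b, |iteratedDerivWithin n f (Set.Icc a b) ξ| ≤ M := fun n hn => by
    obtain ⟨c, hc⟩ := isCompact_Icc.exists_bound_of_continuousOn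
      (hf.continuousOn_iteratedDerivWithin (by exact_mod_cast hn) (uniqueDiffOn_Icc hab))
    filter_upwards [Filter.eventually_ge_atTop c] with M hM ξ hξ using (hc ξ hξ).trans hM
  exact ((Filter.eventually_gt_atTop 0).and
    ((Filter.eventually_all_finite (Set.finite_Iic m)).mpr hbound)).exists

section Interpolation

open Polynomial

theorem iterate_derivative_nodal {R ι : Type*} [CommRing R] [Nontrivial R] (s : Finset ι)
    (v : ι → R) : derivative^[s.card] (Lagrange.nodal s v) = C (s.card.factorial : R) := by
  have hdeg := natDegree_iterate_derivative (Lagrange.nodal s v) s.card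
  have hlead := (Lagrange.nodal_monic (s := s) (v := v)).coeff_natDegree
  rw [Lagrange.natDegree_nodal] at hlead hdeg
  rw [eq_C_of_natDegree_le_zero (hdeg.trans_eq (Nat.sub_self _)), coeff_iterate_derivative]
  simp [hlead, Nat.descFactorial_self]

variable {ι : Type*} {a b y : ℝ} {f : ℝ → ℝ} {s : Finset ι} {x : ι → ℝ}

theorem exists_iteratedDerivWithin_eq_iterate_derivative_eval (hab : a < b) {Q : ℝ[X]}
    (hf : ContDiffOn ℝ s.card f (Set.Icc a b)) (hx : Set.InjOn x s)
    (hmem : ∀ k ∈ s, x k ∈ Set.Icc a b) (hy : y ∈ Set.Icc a b) (hne : ∀ k ∈ s, y ≠ x k)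
    (hQx : ∀ k ∈ s, Q.eval (x k) = f (x k)) (hQy : Q.eval y = f y) :
    ∃ ξ ∈ Set.Icc a b,
      iteratedDerivWithin s.card f (Set.Icc a b) ξ = (derivative^[s.card] Q).eval ξ := by
  set Z := insert y (s.image x) with hZ
  have hyx : y ∉ s.image x := by simpa [eq_comm] using hne
  have hcard : Z.card = s.card + 1 := by
    rw [hZ, Finset.card_insert_of_notMem hyx, Finset.card_image_of_injOn hx]
  have hZmem : ∀ z ∈ Z, z ∈ Set.Icc a b ∧ f z - Q.eval z = 0 := by
    simp only [hZ, Finset.forall_mem_insert, Finset.forall_mem_image]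
    exact ⟨⟨hy, by rw [hQy, sub_self]⟩, fun k hk => ⟨hmem k hk, by rw [hQx k hk, sub_self]⟩⟩
  have hQ : ContDiffOn ℝ s.card (fun z => Q.eval z) (Set.Icc a b) := by
    simpa [aeval_def] using (Q.contDiff_aeval (𝕜 := ℝ) (s.card : WithTop ℕ∞)).contDiffOn
  obtain ⟨ξ, hξ, hzero⟩ := exists_iteratedDerivWithin_eq_zero hab
    (g := f - fun z => Q.eval z) (hf.sub hQ) (Z.orderEmbOfFin hcard).strictMono
    (fun k => (hZmem _ (Z.orderEmbOfFin_mem hcard k)).1)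
    (fun k => (hZmem _ (Z.orderEmbOfFin_mem hcard k)).2)
  rw [iteratedDerivWithin_sub hξ (uniqueDiffOn_Icc hab) (hf ξ hξ) (hQ ξ hξ), sub_eq_zero,
    iteratedDerivWithin_polynomial_eval (uniqueDiffOn_Icc hab) _ _ hξ] at hzero
  exact ⟨ξ, hξ, hzero⟩

theorem exists_sub_eval_interpolate_eq [DecidableEq ι] (hab : a < b)
    (hf : ContDiffOn ℝ s.card f (Set.Icc a b)) (hx : Set.InjOn x s)
    (hmem : ∀ k ∈ s, x k ∈ Set.Icc a b) (hy : y ∈ Set.Icc a b) :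
    ∃ ξ ∈ Set.Icc a b, f y - (Lagrange.interpolate s x fun k => f (x k)).eval y =
      iteratedDerivWithin s.card f (Set.Icc a b) ξ / s.card.factorial * ∏ k ∈ s, (y - x k) := by
  set P := Lagrange.interpolate s x fun k => f (x k)
  have hPx : ∀ k ∈ s, P.eval (x k) = f (x k) := fun k hk =>
    Lagrange.eval_interpolate_at_node _ hx hk
  by_cases hne : ∀ k ∈ s, y ≠ x k
  · have hny : (Lagrange.nodal s x).eval y ≠ 0 := Lagrange.eval_nodal_not_at_node hne
    -- `c` makes `P + c · nodal` agree with `f` at `y` as well as at the nodes.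
    set c := (f y - P.eval y) / (Lagrange.nodal s x).eval y with hc
    obtain ⟨ξ, hξ, h⟩ := exists_iteratedDerivWithin_eq_iterate_derivative_eval
      (Q := P + C c * Lagrange.nodal s x) hab hf hx hmem hy hne
      (fun k hk => by simp [hPx k hk, Lagrange.eval_nodal_at_node hk])
      (by simp [hc, div_mul_cancel₀ _ hny])
    rw [iterate_map_add, iterate_derivative_C_mul, iterate_derivative_nodal,
      iterate_derivative_eq_zero_of_degree_lt (Lagrange.degree_interpolate_lt _ hx), zero_add,
      ← C_mul, eval_C] at h
    refine ⟨ξ, hξ, ?_⟩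
    rw [h, mul_div_cancel_right₀ _ (by positivity), ← Lagrange.eval_nodal, hc,
      div_mul_cancel₀ _ hny]
  · push Not at hne
    obtain ⟨k, hk, rfl⟩ := hne
    exact ⟨x k, hy, by rw [hPx k hk, Finset.prod_eq_zero hk (sub_self _), sub_self, mul_zero]⟩

variable (ι) in
theorem exists_forall_abs_eval_interpolate_sub_le [DecidableEq ι] (hab : a < b)
    {m : ℕ} (hf : ContDiffOn ℝ m f (Set.Icc a b)) :
    ∃ M > 0, ∀ {s : Finset ι} {x : ι → ℝ} {y d : ℝ} {k : ℕ}, k ≤ s.card → s.card ≤ m →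
      Set.InjOn x s → (∀ j ∈ s, x j ∈ Set.Icc a b) → y ∈ Set.Icc a b → 0 ≤ d →
      (∀ j ∈ s, |y - x j| ≤ d) →
      |(Lagrange.interpolate s x fun j => f (x j)).eval y - f y| ≤ M * d ^ k := by
  obtain ⟨M, hM0, hM⟩ := exists_forall_abs_iteratedDerivWithin_le hab hf
  set L := max 1 (b - a)
  refine ⟨M * L ^ m, by positivity, fun {s x y d k} hk hm hx hmem hy hd0 hd => ?_⟩
  obtain ⟨ξ, hξ, h⟩ := exists_sub_eval_interpolate_eq hab
    (hf.of_le (by exact_mod_cast hm)) hx hmem hy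
  have hdL : ∀ j ∈ s, |y - x j| ≤ min d L := fun j hj =>
    le_min (hd j hj) ((Real.dist_le_of_mem_Icc hy (hmem j hj)).trans (le_max_right _ _))
  have hprod : ∏ j ∈ s, |y - x j| ≤ L ^ m * d ^ k :=
    calc ∏ j ∈ s, |y - x j| ≤ (min d L) ^ s.card :=
          (Finset.prod_le_prod (fun _ _ => abs_nonneg _) hdL).trans_eq (by simp)
      _ = (min d L) ^ (s.card - k) * (min d L) ^ k := by rw [← pow_add, Nat.sub_add_cancel hk]
      _ ≤ L ^ (s.card - k) * d ^ k := by
          gcongr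
          exacts [min_le_right _ _, min_le_left _ _]
      _ ≤ L ^ m * d ^ k := by
          gcongr
          exacts [le_max_left _ _, by omega]
  have hquot : |iteratedDerivWithin s.card f (Set.Icc a b) ξ / s.card.factorial| ≤ M := by
    rw [abs_div, Nat.abs_cast]
    exact (div_le_self (abs_nonneg _) (by exact_mod_cast s.card.factorial_pos)).trans
      (hM _ hm ξ hξ)
  rw [abs_sub_comm, h, abs_mul, Finset.abs_prod, mul_assoc]
  gcongr

end Interpolation

theorem lagEval_eq_eval_interpolate (s : Finset ℕ) (x : ℕ → ℝ) (f : ℝ → ℝ) (y : ℝ) :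
    lagEval s x f y = (Lagrange.interpolate s x fun k => f (x k)).eval y := by
  simp [lagEval, Lagrange.interpolate_apply, Polynomial.eval_finsetSum, Lagrange.basis,
    Polynomial.eval_prod, Lagrange.basisDivisor, div_eq_inv_mul]

theorem lagEval_eq_lagEval_erase_add_lagEval_erase {s : Finset ℕ} {x : ℕ → ℝ} {p q : ℕ}
    (hx : Set.InjOn x s) (hp : p ∈ s) (hq : q ∈ s) (hpq : p ≠ q) (f : ℝ → ℝ) (y : ℝ) :
    lagEval s x f y = (y - x q) / (x p - x q) * lagEval (s.erase q) x f y +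
      (1 - (y - x q) / (x p - x q)) * lagEval (s.erase p) x f y := by
  have hne : x p - x q ≠ 0 := sub_ne_zero.mpr fun h => hpq (hx hp hq h)
  have hcompl : 1 - (y - x q) / (x p - x q) = (x q - x p)⁻¹ * (y - x p) := by
    have hne' : x q - x p ≠ 0 := by rwa [← neg_sub, neg_ne_zero]
    field_simp
    ring
  rw [hcompl]
  simp only [lagEval_eq_eval_interpolate,
    Lagrange.interpolate_eq_add_interpolate_erase _ hx hp hq hpq, Lagrange.basisDivisor,
    Polynomial.eval_add, Polynomial.eval_mul, Polynomial.eval_sub, Polynomial.eval_C,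
    Polynomial.eval_X]
  ring

/-- The value `p^l_j(x*)` of the interpolant of `f` on the `l + 1` nodes starting at
`x_{i-r+j}`. -/
noncomputable def stencilValue (x : ℕ → ℝ) (f : ℝ → ℝ) (i r : ℕ) (xs : ℝ) (l j : ℕ) : ℝ :=
  lagEval (Finset.Icc (i - r + j) (i - r + j + l)) x f xs

section Weights

theorem abs_log_sub_log_le {u c d : ℝ} (hu : 0 < u) (hc : u ≤ c) (hd : u ≤ d) :
    |Real.log c - Real.log d| ≤ |c - d| / u := by
  wlog hcd : d ≤ c generalizing c d
  · rw [abs_sub_comm, abs_sub_comm c]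
    exact this hd hc (le_of_not_ge hcd)
  have hc0 := hu.trans_le hc
  have hd0 := hu.trans_le hd
  rw [abs_of_nonneg (sub_nonneg.mpr (Real.log_le_log hd0 hcd)), abs_of_nonneg (sub_nonneg.mpr hcd),
    ← Real.log_div hc0.ne' hd0.ne']
  calc Real.log (c / d) ≤ c / d - 1 := Real.log_le_sub_one_of_pos (div_pos hc0 hd0)
    _ = (c - d) / d := by rw [sub_div, div_self hd0.ne']
    _ ≤ (c - d) / u := div_le_div_of_nonneg_left (sub_nonneg.mpr hcd) hu hd

theorem abs_sub_le_max_mul_abs_log_sub_log {d e : ℝ} (hd : 0 < d) (he : 0 < e) :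
    |d - e| ≤ max d e * |Real.log d - Real.log e| := by
  wlog hde : e ≤ d generalizing d e
  · rw [abs_sub_comm, max_comm, abs_sub_comm (Real.log d)]
    exact this he hd (le_of_not_ge hde)
  rw [abs_of_nonneg (sub_nonneg.mpr (Real.log_le_log he hde)), abs_of_nonneg (sub_nonneg.mpr hde),
    max_eq_left hde, ← Real.log_div hd.ne' he.ne']
  calc d - e = d * (1 - (d / e)⁻¹) := by field_simp
    _ ≤ d * Real.log (d / e) := by
        gcongr
        exact Real.one_sub_inv_le_log_of_pos (div_pos hd he)

theorem convexCombination_pos {C d e : ℝ} (hC : C ∈ Set.Icc 0 1) (hd : 0 < d) (he : 0 < e) :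
    0 < C * d + (1 - C) * e :=
  convex_Ioi (0 : ℝ) hd he hC.1 (sub_nonneg.mpr hC.2) (add_sub_cancel _ _)

theorem div_add_div_pos {C d e : ℝ} (hC : C ∈ Set.Icc 0 1) (hd : 0 < d) (he : 0 < e) :
    0 < C / d + (1 - C) / e := by
  simpa only [div_eq_mul_inv] using convexCombination_pos hC (inv_pos.mpr hd) (inv_pos.mpr he)

theorem abs_normalized_weight_sub_le {C d e : ℝ} (hC : C ∈ Set.Icc 0 1) (hd : 0 < d)
    (he : 0 < e) :
    |C / d / (C / d + (1 - C) / e) - C| ≤ |Real.log d - Real.log e| := by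
  have hC0 : 0 ≤ C := hC.1
  have hC1 : 0 ≤ 1 - C := sub_nonneg.mpr hC.2
  have hS : 0 < C * e + (1 - C) * d := convexCombination_pos hC he hd
  have hdiff : C / d / (C / d + (1 - C) / e) - C =
      C * (1 - C) * (e - d) / (C * e + (1 - C) * d) := by
    have hsum : C / d + (1 - C) / e = (C * e + (1 - C) * d) / (d * e) := by
      rw [div_add_div _ _ hd.ne' he.ne', mul_comm d]
    rw [hsum, sub_eq_iff_eq_add, div_add' _ _ _ hS.ne']
    field_simp
    ring
  have hmax : C * (1 - C) * max d e ≤ C * e + (1 - C) * d := by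
    rw [mul_max_of_nonneg _ _ (by positivity)]
    refine max_le ?_ ?_ <;> nlinarith [mul_nonneg hC0 he.le, mul_nonneg hC1 hd.le,
      mul_nonneg (mul_nonneg hC0 hC0) he.le, mul_nonneg (mul_nonneg hC1 hC1) hd.le]
  rw [hdiff, abs_div, abs_of_pos hS, div_le_iff₀ hS, abs_mul, abs_sub_comm e,
    abs_of_nonneg (mul_nonneg hC0 hC1)]
  calc C * (1 - C) * |d - e|
      ≤ C * (1 - C) * (max d e * |Real.log d - Real.log e|) := by
        gcongr
        exact abs_sub_le_max_mul_abs_log_sub_log hd he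
    _ = |Real.log d - Real.log e| * (C * (1 - C) * max d e) := by ring
    _ ≤ |Real.log d - Real.log e| * (C * e + (1 - C) * d) := by gcongr

/-- The normalized progressive WENO weight `ω̃^l_{j,j}`; its companion `ω̃^l_{j,j+1}` is
`1 - ω̃^l_{j,j}`. -/
noncomputable def omegaW (x : ℕ → ℝ) (i r : ℕ) (xs h t : ℝ) (I : ℕ → ℝ) (l j : ℕ) : ℝ :=
  alphaW x i r xs h t I l j 0 / (alphaW x i r xs h t I l j 0 + alphaW x i r xs h t I l j 1)

variable {x : ℕ → ℝ} {i r l j : ℕ} {xs h : ℝ} {I : ℕ → ℝ}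

theorem alphaW_zero (t : ℝ) :
    alphaW x i r xs h t I l j 0 = Cw x i r xs l j / (h ^ 2 + I j) ^ t := rfl

theorem alphaW_one (t : ℝ) :
    alphaW x i r xs h t I l j 1 = (1 - Cw x i r xs l j) / (h ^ 2 + I (l + 1 - r + j)) ^ t := rfl

theorem alphaW_nonneg (t : ℝ) (hC : Cw x i r xs l j ∈ Set.Icc 0 1) (hh : 0 < h)
    (hI : 0 ≤ I j) (hI' : 0 ≤ I (l + 1 - r + j)) :
    0 ≤ alphaW x i r xs h t I l j 0 ∧ 0 ≤ alphaW x i r xs h t I l j 1 := by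
  rw [alphaW_zero, alphaW_one]
  exact ⟨div_nonneg hC.1 (by positivity), div_nonneg (sub_nonneg.mpr hC.2) (by positivity)⟩

theorem omegaW_mem_Icc (t : ℝ) (hC : Cw x i r xs l j ∈ Set.Icc 0 1) (hh : 0 < h)
    (hI : 0 ≤ I j) (hI' : 0 ≤ I (l + 1 - r + j)) :
    omegaW x i r xs h t I l j ∈ Set.Icc 0 1 := by
  obtain ⟨h0, h1⟩ := alphaW_nonneg t hC hh hI hI'
  exact unitInterval.div_mem h0 (add_nonneg h0 h1) (le_add_of_nonneg_right h1)

theorem alphaW_one_div_add (t : ℝ) (hC : Cw x i r xs l j ∈ Set.Icc 0 1) (hh : 0 < h)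
    (hI : 0 ≤ I j) (hI' : 0 ≤ I (l + 1 - r + j)) :
    alphaW x i r xs h t I l j 1 / (alphaW x i r xs h t I l j 0 + alphaW x i r xs h t I l j 1) =
      1 - omegaW x i r xs h t I l j := by
  have hpos : 0 < alphaW x i r xs h t I l j 0 + alphaW x i r xs h t I l j 1 := by
    rw [alphaW_zero, alphaW_one]
    exact div_add_div_pos hC (by positivity) (by positivity)
  rw [omegaW, one_sub_div hpos.ne', add_sub_cancel_left]

theorem abs_omegaW_sub_Cw_le (t : ℝ) (hC : Cw x i r xs l j ∈ Set.Icc 0 1) (hh : 0 < h)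
    (hI : 0 ≤ I j) (hI' : 0 ≤ I (l + 1 - r + j)) :
    |omegaW x i r xs h t I l j - Cw x i r xs l j| ≤
      |t| * (|I j - I (l + 1 - r + j)| / h ^ 2) := by
  have hh2 : 0 < h ^ 2 := pow_pos hh 2
  rw [omegaW, alphaW_zero, alphaW_one]
  refine (abs_normalized_weight_sub_le hC (by positivity) (by positivity)).trans ?_
  rw [Real.log_rpow (by positivity), Real.log_rpow (by positivity), ← mul_sub, abs_mul]
  gcongr
  refine (abs_log_sub_log_le hh2 (le_add_of_nonneg_right hI)
    (le_add_of_nonneg_right hI')).trans_eq ?_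
  rw [add_sub_add_left_eq_sub]

end Weights

theorem norm_sub_le_of_convex_recursion {E : Type*} [SeminormedAddCommGroup E] [NormedSpace ℝ E]
    {P Q : ℕ → ℕ → E} {C ω : ℕ → ℕ → ℝ} {m : ℕ} {ε : ℝ} (h0 : ∀ j ≤ m, Q 0 j = P 0 j)
    (hP : ∀ n j, n + j < m → P (n + 1) j = C n j • P n j + (1 - C n j) • P n (j + 1))
    (hQ : ∀ n j, n + j < m → Q (n + 1) j = ω n j • Q n j + (1 - ω n j) • Q n (j + 1))
    (hω : ∀ n j, n + j < m → ω n j ∈ Set.Icc 0 1)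
    (hε : ∀ n j, n + j < m → ‖(ω n j - C n j) • (P n j - P n (j + 1))‖ ≤ ε) :
    ∀ n j, n + j ≤ m → ‖Q n j - P n j‖ ≤ n * ε := by
  intro n
  induction n with
  | zero => intro j hj; simp [h0 j (by omega)]
  | succ n ih =>
    intro j hj
    have hsplit : Q (n + 1) j - P (n + 1) j =
        (ω n j • (Q n j - P n j) + (1 - ω n j) • (Q n (j + 1) - P n (j + 1))) +
          (ω n j - C n j) • (P n j - P n (j + 1)) := by
      rw [hP n j (by omega), hQ n j (by omega)]
      module
    obtain ⟨hω0, hω1⟩ := hω n j (by omega)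
    have hconvex : ‖ω n j • (Q n j - P n j) + (1 - ω n j) • (Q n (j + 1) - P n (j + 1))‖ ≤
        n * ε := by
      simpa using convex_closedBall (0 : E) (n * ε) (by simpa using ih j (by omega))
        (by simpa using ih (j + 1) (by omega)) hω0 (sub_nonneg.mpr hω1) (add_sub_cancel _ _)
    rw [hsplit, Nat.cast_succ, add_one_mul]
    exact (norm_add_le _ _).trans (add_le_add hconvex (hε n j (by omega)))

theorem sub_le_mul_of_forall_succ_sub_le {x : ℕ → ℝ} {h : ℝ} {k n : ℕ}
    (hstep : ∀ j < n, x (k + j + 1) - x (k + j) ≤ h) : x (k + n) - x k ≤ n * h := by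
  have hsum := Finset.sum_range_sub (fun j => x (k + j)) n
  have hle := Finset.sum_le_card_nsmul (Finset.range n) _ h fun j hj =>
    hstep j (Finset.mem_range.mp hj)
  simp only [Finset.card_range, nsmul_eq_mul] at hle
  exact hsum.symm.trans_le hle

section Stencil

variable {N i r : ℕ} {x : ℕ → ℝ} {xs : ℝ}

theorem Cw_mem_Icc (hx : StrictMonoOn x (Set.Iic N)) (hri : r ≤ i) (hiN : i + r ≤ N + 1)
    (hxs : xs ∈ Set.Icc (x (i - 1)) (x i)) {l j : ℕ} (hl : r ≤ l) (hj : j + l + 2 ≤ 2 * r) :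
    Cw x i r xs l j ∈ Set.Icc 0 1 := by
  have hleft : x (i - r + j) ≤ xs :=
    (hx.monotoneOn (Set.mem_Iic.mpr (by omega)) (Set.mem_Iic.mpr (by omega))
      (by omega)).trans hxs.1
  have hright : xs ≤ x (i - r + j + l + 1) :=
    hxs.2.trans (hx.monotoneOn (Set.mem_Iic.mpr (by omega)) (Set.mem_Iic.mpr (by omega))
      (by omega))
  rw [Cw, ← neg_div_neg_eq, neg_sub, neg_sub]
  exact unitInterval.div_mem (by linarith) (by linarith) (by linarith)

theorem stencilValue_succ (hx : StrictMonoOn x (Set.Iic N)) (f : ℝ → ℝ) (xs : ℝ) {l j : ℕ}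
    (hN : i - r + j + l + 1 ≤ N) :
    stencilValue x f i r xs (l + 1) j = Cw x i r xs l j * stencilValue x f i r xs l j +
      (1 - Cw x i r xs l j) * stencilValue x f i r xs l (j + 1) := by
  have hinj : Set.InjOn x (Finset.Icc (i - r + j) (i - r + j + (l + 1))) :=
    hx.injOn.mono fun k hk => Set.mem_Iic.mpr ((Finset.mem_Icc.mp hk).2.trans hN)
  have hright : (Finset.Icc (i - r + j) (i - r + j + (l + 1))).erase (i - r + j + (l + 1)) =
      Finset.Icc (i - r + j) (i - r + j + l) := by grind
  have hleft : (Finset.Icc (i - r + j) (i - r + j + (l + 1))).erase (i - r + j) =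
      Finset.Icc (i - r + (j + 1)) (i - r + (j + 1) + l) := by grind
  rw [stencilValue, lagEval_eq_lagEval_erase_add_lagEval_erase hinj (Finset.left_mem_Icc.mpr
    (by omega)) (Finset.right_mem_Icc.mpr (by omega)) (by omega), hright, hleft]
  rfl

theorem abs_sub_node_le (hx : StrictMonoOn x (Set.Iic N)) (hri : r ≤ i) (hiN : i + r ≤ N + 1)
    (hxs : xs ∈ Set.Icc (x (i - 1)) (x i)) {h : ℝ} (hh : 0 ≤ h)
    (hstep : ∀ k < N, x (k + 1) - x k ≤ h) {k : ℕ} (hk : k ∈ Set.Ico (i - r) (i + r)) :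
    |xs - x k| ≤ 2 * r * h := by
  obtain ⟨hk1, hk2⟩ := hk
  have hle {m n : ℕ} (hmn : m ≤ n) (hn : n ≤ N) : x m ≤ x n :=
    hx.monotoneOn (Set.mem_Iic.mpr (hmn.trans hn)) (Set.mem_Iic.mpr hn) hmn
  have hwidth : x (i - r + (2 * r - 1)) - x (i - r) ≤ (2 * r - 1 : ℕ) * h :=
    sub_le_mul_of_forall_succ_sub_le fun j hj => hstep _ (by omega)
  have hdist : |xs - x k| ≤ x (i - r + (2 * r - 1)) - x (i - r) :=
    Real.dist_le_of_mem_Icc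
      ⟨(hle (by omega) (by omega)).trans hxs.1, hxs.2.trans (hle (by omega) (by omega))⟩
      ⟨hle hk1 (by omega), hle (by omega) (by omega)⟩
  have hcount : ((2 * r - 1 : ℕ) : ℝ) ≤ 2 * r := by exact_mod_cast Nat.sub_le _ _
  exact (hdist.trans hwidth).trans (by gcongr)

theorem exists_forall_abs_stencilValue_sub_le {a b : ℝ} (hab : a < b) {f : ℝ → ℝ} (r : ℕ)
    (hf : ContDiffOn ℝ (2 * r : ℕ) f (Set.Icc a b)) :
    ∃ D > 0, ∀ {N : ℕ} {x : ℕ → ℝ} {h xs : ℝ} {i l j k : ℕ}, a ≤ x 0 → x N ≤ b →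
      StrictMonoOn x (Set.Iic N) → (∀ k < N, x (k + 1) - x k ≤ h) → 0 ≤ h →
      r ≤ i → i + r ≤ N + 1 → xs ∈ Set.Icc (x (i - 1)) (x i) →
      k ≤ l + 1 → j + l + 1 ≤ 2 * r →
      |stencilValue x f i r xs l j - f xs| ≤ D * h ^ k := by
  obtain ⟨M, hM0, hM⟩ := exists_forall_abs_eval_interpolate_sub_le ℕ hab hf
  refine ⟨M * (2 * r + 1) ^ (2 * r), by positivity, ?_⟩
  intro N x h xs i l j k hax hxb hx hstep hh hri hiN hxs hkl hjl
  have hcard : (Finset.Icc (i - r + j) (i - r + j + l)).card = l + 1 := by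
    rw [Nat.card_Icc]; omega
  have hnode : ∀ n ≤ N, x n ∈ Set.Icc a b := fun n hn =>
    ⟨hax.trans (hx.monotoneOn (Set.mem_Iic.mpr N.zero_le) hn n.zero_le),
      (hx.monotoneOn hn (Set.mem_Iic.mpr le_rfl) hn).trans hxb⟩
  have hxsab : xs ∈ Set.Icc a b :=
    ⟨(hnode (i - 1) (by omega)).1.trans hxs.1, hxs.2.trans (hnode i (by omega)).2⟩
  have hrange : ∀ n ∈ Finset.Icc (i - r + j) (i - r + j + l), n ≤ N ∧ n ∈ Set.Ico (i - r) (i + r) :=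
    fun n hn => by
      rw [Finset.mem_Icc] at hn
      exact ⟨by omega, by omega, by omega⟩
  rw [stencilValue, lagEval_eq_eval_interpolate]
  calc _ ≤ M * (2 * r * h) ^ k :=
        hM (hkl.trans_eq hcard.symm) (hcard.trans_le (by omega))
          (hx.injOn.mono fun n hn => (hrange n hn).1) (fun n hn => hnode n (hrange n hn).1) hxsab
          (by positivity) fun n hn => abs_sub_node_le hx hri hiN hxs hh hstep (hrange n hn).2
    _ = M * (2 * r) ^ k * h ^ k := by rw [mul_pow, mul_assoc]
    _ ≤ M * (2 * r + 1) ^ k * h ^ k := by gcongr; exact le_add_of_nonneg_right zero_le_one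
    _ ≤ M * (2 * r + 1) ^ (2 * r) * h ^ k := by
        gcongr
        · exact le_add_of_nonneg_left (by positivity)
        · omega

theorem abs_sub_stencilValue_le (hx : StrictMonoOn x (Set.Iic N)) (hri : r ≤ i)
    (hiN : i + r ≤ N + 1) (hxs : xs ∈ Set.Icc (x (i - 1)) (x i)) (hr : 1 ≤ r) {h t η δ y : ℝ}
    (hh : 0 < h) {f : ℝ → ℝ} {I : ℕ → ℝ} {q : ℕ → ℕ → ℝ} (hI : ∀ k < r, 0 ≤ I k)
    (hIdiff : ∀ k < r, ∀ k' < r, |I k - I k'| ≤ η)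
    (herr : ∀ l j : ℕ, r ≤ l → j + l + 1 ≤ 2 * r → |stencilValue x f i r xs l j - y| ≤ δ)
    (hbase : ∀ j < r, q r j = lagEval (Finset.Icc (i - r + j) (i + j)) x f xs)
    (hrec : ∀ l j : ℕ, r ≤ l → j + l + 2 ≤ 2 * r →
      q (l + 1) j =
        alphaW x i r xs h t I l j 0 /
            (alphaW x i r xs h t I l j 0 + alphaW x i r xs h t I l j 1) * q l j +
          alphaW x i r xs h t I l j 1 /
            (alphaW x i r xs h t I l j 0 + alphaW x i r xs h t I l j 1) * q l (j + 1)) :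
    |q (2 * r - 1) 0 - stencilValue x f i r xs (2 * r - 1) 0| ≤
      (r - 1 : ℕ) * (|t| * (η / h ^ 2) * (2 * δ)) := by
  have hC (n j : ℕ) (hj : n + j < r - 1) : Cw x i r xs (r + n) j ∈ Set.Icc 0 1 :=
    Cw_mem_Icc hx hri hiN hxs (by omega) (by omega)
  have hI' (n j : ℕ) (hj : n + j < r - 1) : 0 ≤ I j ∧ 0 ≤ I (r + n + 1 - r + j) :=
    ⟨hI _ (by omega), hI _ (by omega)⟩
  have hdev := norm_sub_le_of_convex_recursion (m := r - 1)
    (P := fun n => stencilValue x f i r xs (r + n)) (Q := fun n => q (r + n))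
    (C := fun n => Cw x i r xs (r + n)) (ω := fun n => omegaW x i r xs h t I (r + n))
    (ε := |t| * (η / h ^ 2) * (2 * δ)) ?_ ?_ ?_ ?_ ?_ (r - 1) 0 le_rfl
  · rwa [show r + (r - 1) = 2 * r - 1 by omega] at hdev
  · intro j hj
    rw [add_zero, hbase j (by omega), stencilValue, show i - r + j + r = i + j by omega]
  · exact fun n j hj => stencilValue_succ hx f xs (l := r + n) (by omega)
  · intro n j hj
    rw [← add_assoc, hrec _ _ (by omega) (by omega),
      alphaW_one_div_add t (hC n j hj) hh (hI' n j hj).1 (hI' n j hj).2]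
    rfl
  · exact fun n j hj => omegaW_mem_Icc t (hC n j hj) hh (hI' n j hj).1 (hI' n j hj).2
  · intro n j hj
    have hω : |omegaW x i r xs h t I (r + n) j - Cw x i r xs (r + n) j| ≤ |t| * (η / h ^ 2) :=
      (abs_omegaW_sub_Cw_le t (hC n j hj) hh (hI' n j hj).1 (hI' n j hj).2).trans (by
        gcongr
        exact hIdiff _ (by omega) _ (by omega))
    have hP : |stencilValue x f i r xs (r + n) j - stencilValue x f i r xs (r + n) (j + 1)| ≤
        2 * δ := by
      rw [two_mul]
      refine (abs_sub_le _ y _).trans (add_le_add (herr _ _ (by omega) (by omega)) ?_)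
      rw [abs_sub_comm]
      exact herr _ _ (by omega) (by omega)
    rw [norm_smul]
    exact mul_le_mul hω hP (norm_nonneg _) ((abs_nonneg _).trans hω)

end Stencil

theorem stmt7_general (r : ℕ) (hr : 1 ≤ r) (t a b : ℝ) (hab : a < b) (f : ℝ → ℝ)
    (hf : ContDiffOn ℝ (2 * r) f (Set.Icc a b)) (A : ℝ) (hA : 0 ≤ A) :
    ∃ B > 0, ∀ (N : ℕ) (x : ℕ → ℝ) (h : ℝ) (i : ℕ) (xs : ℝ) (I : ℕ → ℝ) (q : ℕ → ℕ → ℝ),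
      a ≤ x 0 → x N ≤ b → StrictMonoOn x (Set.Iic N) → (∀ k < N, x (k + 1) - x k ≤ h) →
      r ≤ i → i + r ≤ N + 1 → xs ∈ Set.Icc (x (i - 1)) (x i) →
      (∀ k < r, 0 ≤ I k) → (∀ k < r, ∀ k' < r, |I k - I k'| ≤ A * h ^ (r + 1)) →
      (∀ j < r, q r j = lagEval (Finset.Icc (i - r + j) (i + j)) x f xs) →
      (∀ l j : ℕ, r ≤ l → j + l + 2 ≤ 2 * r →
        q (l + 1) j =
          alphaW x i r xs h t I l j 0 /
              (alphaW x i r xs h t I l j 0 + alphaW x i r xs h t I l j 1) * q l j +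
            alphaW x i r xs h t I l j 1 /
              (alphaW x i r xs h t I l j 0 + alphaW x i r xs h t I l j 1) * q l (j + 1)) →
      |q (2 * r - 1) 0 - f xs| ≤ B * h ^ (2 * r) := by
  obtain ⟨D, hD0, hD⟩ := exists_forall_abs_stencilValue_sub_le hab r (by exact_mod_cast hf)
  refine ⟨(r - 1 : ℕ) * (|t| * A * (2 * D)) + D, by positivity, ?_⟩
  intro N x h i xs I q hax hxb hx hstep hri hiN hxs hI hIdiff hbase hrec
  have hh : 0 < h := (sub_pos.mpr (hx (Set.mem_Iic.mpr (by omega)) (Set.mem_Iic.mpr (by omega))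
    (Nat.lt_succ_self (i - 1)))).trans_le (hstep (i - 1) (by omega))
  have hinterp {l j k : ℕ} (hk : k ≤ l + 1) (hj : j + l + 1 ≤ 2 * r) :
      |stencilValue x f i r xs l j - f xs| ≤ D * h ^ k :=
    hD hax hxb hx hstep hh.le hri hiN hxs hk hj
  have hdev := abs_sub_stencilValue_le hx hri hiN hxs hr hh hI hIdiff
    (fun _ _ hl hj => hinterp (Nat.succ_le_succ hl) hj) hbase hrec
  have hlast := hinterp (l := 2 * r - 1) (j := 0) (k := 2 * r) (by omega) (by omega)
  calc |q (2 * r - 1) 0 - f xs| ≤ _ := abs_sub_le _ (stencilValue x f i r xs (2 * r - 1) 0) _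
    _ ≤ _ := add_le_add hdev hlast
    _ = _ := by
        field_simp
        ring

theorem stmt7 (r : ℕ) (hr : 2 ≤ r) (t : ℝ) (ht : 0 < t) (a b : ℝ) (hab : a < b)
    (f : ℝ → ℝ) (hf : ContDiffOn ℝ (2 * r) f (Set.Icc a b)) (A : ℝ) (hA : 0 < A) :
    ∃ B > 0, ∃ h₀ > 0,
      ∀ (N : ℕ) (x : ℕ → ℝ) (h : ℝ) (i : ℕ) (xs : ℝ) (I : ℕ → ℝ) (q : ℕ → ℕ → ℝ),
        a ≤ x 0 → x N ≤ b →
        (∀ k k' : ℕ, k < k' → k' ≤ N → x k < x k') →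
        (∀ k : ℕ, 1 ≤ k → k ≤ N → x k - x (k - 1) ≤ h) →
        (∃ k : ℕ, 1 ≤ k ∧ k ≤ N ∧ x k - x (k - 1) = h) →
        h ≤ h₀ →
        r ≤ i → i + r ≤ N + 1 →
        x (i - 1) < xs → xs < x i →
        (∀ k : ℕ, k < r → 0 ≤ I k) →
        (∀ k : ℕ, k < r → I k ≤ A * h ^ 2) →
        (∀ k k' : ℕ, k < r → k' < r → |I k - I k'| ≤ A * h ^ (r + 1)) →
        (∀ j : ℕ, j < r → q r j = lagEval (Finset.Icc (i - r + j) (i + j)) x f xs) →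
        (∀ l j : ℕ, r ≤ l → l + 2 ≤ 2 * r → j + l + 2 ≤ 2 * r →
          q (l + 1) j =
            alphaW x i r xs h t I l j 0 /
                (alphaW x i r xs h t I l j 0 + alphaW x i r xs h t I l j 1) * q l j +
              alphaW x i r xs h t I l j 1 /
                (alphaW x i r xs h t I l j 0 + alphaW x i r xs h t I l j 1) * q l (j + 1)) →
        |q (2 * r - 1) 0 - f xs| ≤ B * h ^ (2 * r) := by
  obtain ⟨B, hB, hbound⟩ := stmt7_general r (by omega) t a b hab f hf A hA.le
  exact ⟨B, hB, 1, one_pos, fun N x h i xs I q hax hxb hx hstep _ _ hri hiN hxs hxs' hI _ hI' h0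
      hq => hbound N x h i xs I q hax hxb (fun k _ k' hk' hkk' => hx k k' hkk' hk')
      (fun k hk => hstep (k + 1) (by omega) hk) hri hiN ⟨hxs.le, hxs'.le⟩ hI
      (fun k hk k' hk' => hI' k k' hk hk') h0 fun l j hl hj => hq l j hl (by omega) hj⟩
end

section
/- Let n ≥ 1 and r ≥ 2 be integers, t > 0 a real, B = Π_{q=1}^n [a_q, b_q] a box, f : ℝⁿ → ℝ a function that is 2nr times continuously differentiable on B, and A > 0 a constant. Then there exist B' > 0 and h₀ > 0 with the following property. For each q = 1, …, n let a_q ≤ x^{(q)}_0 < … < x^{(q)}_{N_q} ≤ b_q be a grid, with global mesh size h := max over all q and k of (x^{(q)}_k − x^{(q)}_{k-1}) satisfying h ≤ h₀; let i_q be indices with r ≤ i_q ≤ N_q − r + 1; let x* with x^{(q)}_{i_q-1} < x_q* < x^{(q)}_{i_q} for each q; and let (I^r_k)_{k∈{0,…,r−1}ⁿ} be nonnegative reals with I^r_k ≤ A·h² for all k and |I^r_k − I^r_{k'}| ≤ A·h^{r+1} for all k, k'. Define the progressive multivariate WENO value Q^{2r-1}_0 as follows: for k ∈ {0,…,r−1}ⁿ,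 Q^r_k = P^r_k(x*), where P^r_k is the tensor-product Lagrange interpolant of f on Π_q {x^{(q)}_{i_q-r+k_q}, …, x^{(q)}_{i_q+k_q}}; for l = r, …, 2r−2 and j ∈ {0,…,2r−2−l}ⁿ, Q^{l+1}_j = Σ_{v∈{0,1}ⁿ} ω̃^l_{j,j+v} · Q^l_{j+v}, where ω̃^l_{j,j+v} = α̃^l_{j,j+v}/Σ_{w∈{0,1}ⁿ} α̃^l_{j,j+w}, α̃^l_{j,j+v} = (Π_q C^l_{j_q, j_q+v_q}(x_q*))/(h² + I^r_{j+(l−(r−1))v})^t, and C^l_{j_q, j_q}(x_q*) = (x_q* − x^{(q)}_{i_q-r+j_q+l+1})/(x^{(q)}_{i_q-r+j_q} − x^{(q)}_{i_q-r+j_q+l+1}), C^l_{j_q, j_q+1}(x_q*) = 1 − C^l_{j_q, j_q}(x_q*). Then |Q^{2r-1}_0 − f(x*)| ≤ B'·h^{2r}. -/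
/-- Value at `y` of the tensor-product Lagrange interpolant of `f` on the Cartesian
product of the node sets `{x q k : k ∈ s q}`, `q = 1, …, n`. -/
noncomputable def tensorLagEval (n : ℕ) (s : Fin n → Finset ℕ) (x : Fin n → ℕ → ℝ)
    (f : (Fin n → ℝ) → ℝ) (y : Fin n → ℝ) : ℝ :=
  ∑ l ∈ Fintype.piFinset s, f (fun q => x q (l q)) *
    ∏ q, ∏ k ∈ (s q).erase (l q), (y q - x q k) / (x q (l q) - x q k)

/-- Unnormalized progressive multivariate WENO weight
`α̃^l_{j,j+v} = (Π_q C^l_{j_q, j_q+v_q}(x*_q)) / (h² + I^r_{j+(l-(r-1))·v})^t`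
for `v ∈ {0,1}ⁿ`. -/
noncomputable def wenoAlpha (n r : ℕ) (x : Fin n → ℕ → ℝ) (i : Fin n → ℕ)
    (xs : Fin n → ℝ) (h t : ℝ) (I : (Fin n → ℕ) → ℝ) (l : ℕ) (j v : Fin n → ℕ) : ℝ :=
  (∏ q : Fin n,
    (if v q = 0 then
      (xs q - x q (i q - r + j q + l + 1)) /
        (x q (i q - r + j q) - x q (i q - r + j q + l + 1))
    else
      1 - (xs q - x q (i q - r + j q + l + 1)) /
        (x q (i q - r + j q) - x q (i q - r + j q + l + 1)))) /
    (h ^ 2 + I (fun q => j q + (l + 1 - r) * v q)) ^ t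

/-!
The nonlinear weights of each level are perturbations of the linear weights in Neville's recursion,
which rebuild the interpolant on `l + 2` nodes per coordinate from those on `l + 1` nodes. As the
smoothness indicators are `O(h²)` and differ by `O(h^(r+1))`, the factors `(h² + I)^(-t)` of one
level agree up to a relative error `O(h^(r-1))`. Both families of weights add up to `1`, so only
the interpolation errors `O(h^(r+1))` of the substencils are hit by that perturbation: each of the
`r - 1` levels moves the value away from the Lagrange interpolant by `O(h^(2r))`, and the
interpolant on the full stencil is itself accurate of order `2r`.

The interpolation error is bounded by induction on the set of interpolated coordinates. A new
coordinate contributes the univariate remainder of the interpolant in the old ones, whose `M`-th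
derivative in the new coordinate is the same interpolant of a partial derivative of `f`, hence
bounded by the induction hypothesis. Lebesgue constants, and with them the quasi-uniformity of the
grid, never enter; the price is the smoothness of total order `2nr`.
-/

open Finset Polynomial

section LagrangeWeight

variable {κ : Type*} [DecidableEq κ] {s : Finset κ} {v : κ → ℝ}

/-- The value at `y` of the Lagrange basis polynomial of the index `k`, for the nodes `v` on `s`.
Defined through the interpolant of the indicator of `k`, so that it vanishes for `k ∉ s`. -/
noncomputable def lagrangeWeight (s : Finset κ) (v : κ → ℝ) (y : ℝ) (k : κ) : ℝ :=
  (Lagrange.interpolate s v (Pi.single k 1)).eval y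

theorem lagrangeWeight_of_notMem {k : κ} (hk : k ∉ s) (y : ℝ) : lagrangeWeight s v y k = 0 := by
  have hzero : Lagrange.interpolate s v (Pi.single k 1) = Lagrange.interpolate s v 0 :=
    Lagrange.interpolate_eq_of_values_eq_on _ _ fun j hj =>
      Pi.single_eq_of_ne (ne_of_mem_of_not_mem hj hk) _
  rw [lagrangeWeight, hzero, map_zero, eval_zero]

theorem lagrangeWeight_eq_eval_basis {k : κ} (hk : k ∈ s) (y : ℝ) :
    lagrangeWeight s v y k = (Lagrange.basis s v k).eval y := by
  simp [lagrangeWeight, Lagrange.interpolate_apply, Pi.single_apply, hk]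

theorem lagrangeWeight_eq_prod {k : κ} (hk : k ∈ s) (y : ℝ) :
    lagrangeWeight s v y k = ∏ j ∈ s.erase k, (y - v j) / (v k - v j) := by
  simp [lagrangeWeight_eq_eval_basis hk, Lagrange.basis, Lagrange.basisDivisor, eval_prod,
    div_eq_inv_mul]

theorem eval_interpolate_eq_sum_lagrangeWeight (s : Finset κ) (v : κ → ℝ) (r : κ → ℝ) (y : ℝ) :
    (Lagrange.interpolate s v r).eval y = ∑ k ∈ s, r k * lagrangeWeight s v y k := by
  simp only [Lagrange.interpolate_apply, eval_finsetSum, eval_mul, eval_C]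
  exact sum_congr rfl fun k hk => by rw [lagrangeWeight_eq_eval_basis hk]

theorem sum_lagrangeWeight (hv : Set.InjOn v s) (hs : s.Nonempty) (y : ℝ) :
    ∑ k ∈ s, lagrangeWeight s v y k = 1 := by
  have h := eval_interpolate_eq_sum_lagrangeWeight s v 1 y
  rw [Lagrange.interpolate_one hv hs, eval_one] at h
  simpa using h.symm

/-- The linear weight in Neville's recursion of the substencil that keeps the first node `α`
(`e = 0`) or the last node `β` (`e ≠ 0`) of a stencil, written as `C^l_{j,j+e}` in `wenoAlpha`. -/
noncomputable def nevilleWeight (α β y : ℝ) (e : ℕ) : ℝ :=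
  if e = 0 then (y - β) / (α - β) else 1 - (y - β) / (α - β)

theorem nevilleWeight_nonneg {α β y : ℝ} (hy : y ∈ Set.Icc α β) (e : ℕ) :
    0 ≤ nevilleWeight α β y e := by
  have hα : α - β ≤ y - β := sub_le_sub_right hy.1 β
  have hβ : y - β ≤ 0 := sub_nonpos.2 hy.2
  unfold nevilleWeight
  split_ifs
  · exact div_nonneg_of_nonpos hβ (hα.trans hβ)
  · exact sub_nonneg.2 (div_le_one_of_ge hα (hα.trans hβ))

theorem sum_nevilleWeight (α β y : ℝ) : ∑ e ∈ {0, 1}, nevilleWeight α β y e = 1 := by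
  simp [nevilleWeight]

theorem lagrangeWeight_eq_sum_nevilleWeight_mul (hv : Set.InjOn v s) {i j : κ} (hi : i ∈ s)
    (hj : j ∈ s) (hij : i ≠ j) (y : ℝ) (k : κ) :
    lagrangeWeight s v y k =
      nevilleWeight (v i) (v j) y 0 * lagrangeWeight (s.erase j) v y k +
        nevilleWeight (v i) (v j) y 1 * lagrangeWeight (s.erase i) v y k := by
  have hne : v i ≠ v j := hv.ne hi hj hij
  have hleft : (Lagrange.basisDivisor (v i) (v j)).eval y = nevilleWeight (v i) (v j) y 0 := by
    simp [Lagrange.basisDivisor, nevilleWeight, div_eq_inv_mul]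
  have hright : (Lagrange.basisDivisor (v j) (v i)).eval y = nevilleWeight (v i) (v j) y 1 := by
    have h := congrArg (eval y) (Lagrange.basisDivisor_add_symm hne)
    rw [eval_add, eval_one, hleft] at h
    simpa [nevilleWeight] using eq_sub_of_add_eq' h
  simp only [lagrangeWeight]
  rw [Lagrange.interpolate_eq_add_interpolate_erase _ hv hi hj hij, eval_add, eval_mul, eval_mul,
    hleft, hright]
  ring

end LagrangeWeight

section Remainder

open scoped Nat

variable {a b : ℝ}

theorem exists_strictMono_zeros_of_hasDerivWithinAt {g g' : ℝ → ℝ}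
    (hg : ∀ u ∈ Set.Icc a b, HasDerivWithinAt g (g' u) (Set.Icc a b) u) {m : ℕ}
    {z : Fin (m + 1) → ℝ} (hz : StrictMono z) (hzI : ∀ i, z i ∈ Set.Icc a b)
    (hgz : ∀ i, g (z i) = 0) :
    ∃ w : Fin m → ℝ, StrictMono w ∧ (∀ i, w i ∈ Set.Icc a b) ∧ ∀ i, g' (w i) = 0 := by
  have hrolle : ∀ i : Fin m, ∃ w ∈ Set.Ioo (z i.castSucc) (z i.succ), g' w = 0 := fun i => by
    have hsub : Set.Icc (z i.castSucc) (z i.succ) ⊆ Set.Icc a b :=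
      Set.Icc_subset_Icc (hzI _).1 (hzI _).2
    exact exists_hasDerivAt_eq_zero (hz Fin.castSucc_lt_succ)
      (fun u hu => (hg u (hsub hu)).continuousWithinAt.mono hsub)
      (by rw [hgz, hgz])
      (fun u hu => (hg u (hsub (Set.Ioo_subset_Icc_self hu))).hasDerivAt
        (Filter.mem_of_superset (Icc_mem_nhds hu.1 hu.2) hsub))
  choose w hw hw0 using hrolle
  refine ⟨w, fun i j hij => ?_, fun i => ?_, hw0⟩
  · exact (hw i).2.trans_le ((hz.monotone (Fin.succ_le_castSucc_iff.2 hij)).trans (hw j).1.le)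
  · exact ⟨(hzI _).1.trans (hw i).1.le, (hw i).2.le.trans (hzI _).2⟩

theorem exists_zero_of_strictMono_zeros {m : ℕ} {g : ℕ → ℝ → ℝ}
    (hg : ∀ k < m, ∀ u ∈ Set.Icc a b, HasDerivWithinAt (g k) (g (k + 1) u) (Set.Icc a b) u)
    {z : Fin (m + 1) → ℝ} (hz : StrictMono z) (hzI : ∀ i, z i ∈ Set.Icc a b)
    (hgz : ∀ i, g 0 (z i) = 0) : ∃ ξ ∈ Set.Icc a b, g m ξ = 0 := by
  induction m generalizing g with
  | zero => exact ⟨z 0, hzI 0, hgz 0⟩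
  | succ m ih =>
    obtain ⟨w, hw, hwI, hgw⟩ :=
      exists_strictMono_zeros_of_hasDerivWithinAt (hg 0 m.succ_pos) hz hzI hgz
    exact ih (g := fun k => g (k + 1)) (fun k hk => hg (k + 1) (Nat.succ_lt_succ hk)) hw hwI hgw

theorem iterate_derivative_of_natDegree_le {R : Type*} [CommSemiring R] {p : R[X]} {m : ℕ}
    (hp : p.natDegree ≤ m) : derivative^[m] p = C (m ! * p.coeff m) := by
  have hdeg : (derivative^[m] p).natDegree ≤ 0 := by
    simpa [Nat.sub_eq_zero_of_le hp] using natDegree_iterate_derivative p m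
  rw [eq_C_of_natDegree_le_zero hdeg, coeff_iterate_derivative, zero_add, Nat.descFactorial_self,
    nsmul_eq_mul]

theorem exists_eq_factorial_mul_coeff {m : ℕ} {g : ℕ → ℝ → ℝ}
    (hg : ∀ k < m, ∀ u ∈ Set.Icc a b, HasDerivWithinAt (g k) (g (k + 1) u) (Set.Icc a b) u)
    {p : ℝ[X]} (hp : p.natDegree ≤ m) {Z : Finset ℝ} (hZ : #Z = m + 1)
    (hZI : ∀ z ∈ Z, z ∈ Set.Icc a b) (hgp : ∀ z ∈ Z, g 0 z = p.eval z) :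
    ∃ ξ ∈ Set.Icc a b, g m ξ = m ! * p.coeff m := by
  have hZmem : ∀ i, Z.orderEmbOfFin hZ i ∈ Z := Z.orderEmbOfFin_mem hZ
  obtain ⟨ξ, hξ, hzero⟩ := exists_zero_of_strictMono_zeros
    (g := fun k u => g k u - (derivative^[k] p).eval u)
    (fun k hk u hu => by
      rw [Function.iterate_succ_apply']
      exact (hg k hk u hu).sub (Polynomial.hasDerivWithinAt _ _ _))
    (Z.orderEmbOfFin hZ).strictMono (fun i => hZI _ (hZmem i))
    (fun i => sub_eq_zero.2 (hgp _ (hZmem i)))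
  refine ⟨ξ, hξ, ?_⟩
  simpa [iterate_derivative_of_natDegree_le hp, sub_eq_zero] using hzero

theorem exists_sub_eval_interpolate_eq_s14 {κ : Type*} [DecidableEq κ] {s : Finset κ} {v : κ → ℝ}
    {g : ℕ → ℝ → ℝ}
    (hg : ∀ k < #s, ∀ u ∈ Set.Icc a b, HasDerivWithinAt (g k) (g (k + 1) u) (Set.Icc a b) u)
    (hv : Set.InjOn v s) (hvI : ∀ k ∈ s, v k ∈ Set.Icc a b) {y : ℝ} (hy : y ∈ Set.Icc a b) :
    ∃ ξ ∈ Set.Icc a b, g 0 y - (Lagrange.interpolate s v fun k => g 0 (v k)).eval y =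
      g #s ξ / (#s)! * ∏ k ∈ s, (y - v k) := by
  set p := Lagrange.interpolate s v fun k => g 0 (v k)
  have hpv : ∀ k ∈ s, p.eval (v k) = g 0 (v k) := fun k hk =>
    Lagrange.eval_interpolate_at_node _ hv hk
  by_cases hnode : y ∈ s.image v
  · obtain ⟨k, hk, rfl⟩ := mem_image.1 hnode
    refine ⟨v k, hy, ?_⟩
    rw [hpv k hk, sub_self, prod_eq_zero hk (sub_self _), mul_zero]
  set W := Lagrange.nodal s v
  have hWy : W.eval y ≠ 0 := Lagrange.eval_nodal_not_at_node fun k hk hyk =>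
    hnode (mem_image.2 ⟨k, hk, hyk.symm⟩)
  -- The multiple of the nodal polynomial is chosen so that `p + C c * W` also matches `g 0` at `y`.
  set c := (g 0 y - p.eval y) / W.eval y
  have hcW : c * W.eval y = g 0 y - p.eval y := div_mul_cancel₀ _ hWy
  have hpdeg : p.degree < #s := Lagrange.degree_interpolate_lt _ hv
  have hWdeg : W.natDegree = #s := Lagrange.natDegree_nodal
  have hcoeff : (p + C c * W).coeff #s = c := by
    have hW1 : W.coeff #s = 1 := hWdeg ▸ (Lagrange.nodal_monic (s := s) (v := v)).coeff_natDegree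
    rw [coeff_add, coeff_C_mul, coeff_eq_zero_of_degree_lt hpdeg, hW1, zero_add, mul_one]
  obtain ⟨ξ, hξ, hgξ⟩ := exists_eq_factorial_mul_coeff hg (p := p + C c * W)
    (Z := insert y (s.image v))
    (natDegree_add_le_of_degree_le (natDegree_le_of_degree_le hpdeg.le)
      ((natDegree_C_mul_le _ _).trans hWdeg.le))
    (by rw [card_insert_of_notMem hnode, card_image_of_injOn hv])
    ((forall_mem_insert _ _ _).2 ⟨hy, forall_mem_image.2 hvI⟩)
    (by
      refine (forall_mem_insert _ _ _).2 ⟨by simp [hcW], forall_mem_image.2 fun k hk => ?_⟩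
      simp [hpv k hk, W, Lagrange.eval_nodal_at_node hk])
  refine ⟨ξ, hξ, ?_⟩
  rw [hgξ, hcoeff, mul_div_cancel_left₀ _ (Nat.cast_ne_zero.2 (Nat.factorial_ne_zero _)), ← hcW,
    Lagrange.eval_nodal]

end Remainder

section TensorProduct

variable {ι κ : Type*} [Fintype ι] [DecidableEq ι]

theorem sum_piFinset_sum_update_mul_prod {s : ι → Finset κ} {w : ι → κ → ℝ}
    {q : ι} (hw : ∑ k ∈ s q, w q k = 1) (φ : (ι → κ) → ℝ) :
    ∑ l ∈ Fintype.piFinset s, (∑ k ∈ s q, φ (Function.update l q k) * w q k) * ∏ p, w p (l p) =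
      ∑ l ∈ Fintype.piFinset s, φ l * ∏ p, w p (l p) := by
  have hprod : ∀ (l : ι → κ) (k : κ), (∏ p, w p (Function.update l q k p)) * w q (l q) =
      w q k * ∏ p, w p (l p) := fun l k => by
    simp only [Function.apply_update w, prod_update_of_mem (mem_univ q)]
    rw [prod_eq_mul_prod_sdiff_singleton_of_mem (mem_univ q) fun p => w p (l p)]
    ring
  calc ∑ l ∈ Fintype.piFinset s, (∑ k ∈ s q, φ (Function.update l q k) * w q k) * ∏ p, w p (l p)
      = ∑ lk ∈ Fintype.piFinset s ×ˢ s q,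
          φ (Function.update lk.1 q lk.2) * (w q lk.2 * ∏ p, w p (lk.1 p)) := by
        simp only [sum_product, sum_mul, mul_assoc]
    _ = ∑ lk ∈ Fintype.piFinset s ×ˢ s q, φ lk.1 * ((∏ p, w p (lk.1 p)) * w q lk.2) := by
        have hswap : ∀ lk ∈ Fintype.piFinset s ×ˢ s q,
            (Function.update lk.1 q lk.2, lk.1 q) ∈ Fintype.piFinset s ×ˢ s q := by
          simp only [mem_product, Fintype.mem_piFinset]
          refine fun lk hlk => ⟨fun p => ?_, hlk.1 q⟩
          rcases eq_or_ne p q with rfl | hp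
          · simpa using hlk.2
          · simpa [hp] using hlk.1 p
        exact sum_nbij' (fun lk => (Function.update lk.1 q lk.2, lk.1 q))
          (fun lk => (Function.update lk.1 q lk.2, lk.1 q)) hswap hswap
          (by simp) (by simp) (fun lk _ => by rw [hprod])
    _ = ∑ l ∈ Fintype.piFinset s, φ l * ∏ p, w p (l p) := by
        simp only [sum_product, ← mul_sum, hw, mul_one]

variable [DecidableEq κ] {s : ι → Finset κ} {x : ι → κ → ℝ} {y : ι → ℝ}

/-- Tensor-product Lagrange interpolation of `F` in the coordinates `q ∈ S` only, evaluated at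
`y q` for `q ∈ S` and at `z q` for `q ∉ S`. The sum runs over the nodes of all coordinates, since
the weights of a coordinate outside `S` add up to `1`. -/
noncomputable def partialTensorLag (s : ι → Finset κ) (x : ι → κ → ℝ) (y : ι → ℝ) (S : Finset ι)
    (F : (ι → ℝ) → ℝ) (z : ι → ℝ) : ℝ :=
  ∑ l ∈ Fintype.piFinset s, F (S.piecewise (fun q => x q (l q)) z) *
    ∏ q, lagrangeWeight (s q) (x q) (y q) (l q)

theorem partialTensorLag_empty (hx : ∀ q, Set.InjOn (x q) (s q)) (hs : ∀ q, (s q).Nonempty)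
    (F : (ι → ℝ) → ℝ) (z : ι → ℝ) : partialTensorLag s x y ∅ F z = F z := by
  simp only [partialTensorLag, piecewise_empty, ← mul_sum]
  rw [← prod_univ_sum, prod_congr rfl fun q _ => sum_lagrangeWeight (hx q) (hs q) (y q),
    prod_const_one, mul_one]

theorem partialTensorLag_insert {S : Finset ι} {q : ι} (hq : q ∉ S)
    (hx : Set.InjOn (x q) (s q)) (hs : (s q).Nonempty) (F : (ι → ℝ) → ℝ) (z : ι → ℝ) :
    partialTensorLag s x y (insert q S) F z =
      (Lagrange.interpolate (s q) (x q) fun k =>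
        partialTensorLag s x y S F (Function.update z q (x q k))).eval (y q) := by
  have hnode : ∀ (l : ι → κ) (k : κ),
      (insert q S).piecewise (fun p => x p (Function.update l q k p)) z =
        S.piecewise (fun p => x p (l p)) (Function.update z q (x q k)) := fun l k => by
    simp only [Function.apply_update x]
    rw [piecewise_insert, Function.update_self, update_piecewise_of_notMem _ _ _ hq]
    exact S.piecewise_congr (fun p hp => Function.update_of_ne (ne_of_mem_of_not_mem hp hq) _ _)
      fun _ _ => rfl
  rw [eval_interpolate_eq_sum_lagrangeWeight]
  simp only [partialTensorLag]
  rw [← sum_piFinset_sum_update_mul_prod (sum_lagrangeWeight hx hs (y q))]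
  simp only [hnode, sum_mul]
  rw [sum_comm]
  exact sum_congr rfl fun k _ => sum_congr rfl fun l _ => mul_right_comm _ _ _

theorem partialTensorLag_univ (F : (ι → ℝ) → ℝ) (z : ι → ℝ) :
    partialTensorLag s x y univ F z =
      ∑ l ∈ Fintype.piFinset s, F (fun q => x q (l q)) *
        ∏ q, lagrangeWeight (s q) (x q) (y q) (l q) := by
  simp only [partialTensorLag, piecewise_univ]

end TensorProduct

section Box

variable {ι : Type*} {a b : ι → ℝ}

theorem uniqueDiffOn_Icc_pi (hab : ∀ q, a q < b q) : UniqueDiffOn ℝ (Set.Icc a b) :=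
  Set.pi_univ_Icc a b ▸ UniqueDiffOn.univ_pi fun q => uniqueDiffOn_Icc (hab q)

theorem update_mem_Icc [DecidableEq ι] {z : ι → ℝ} (hz : z ∈ Set.Icc a b) {q : ι} {u : ℝ}
    (hu : u ∈ Set.Icc (a q) (b q)) : Function.update z q u ∈ Set.Icc a b :=
  ⟨le_update_iff.2 ⟨hu.1, fun p _ => hz.1 p⟩, update_le_iff.2 ⟨hu.2, fun p _ => hz.2 p⟩⟩

end Box

section PartialDerivative

variable {ι : Type*} [DecidableEq ι]

/-- The partial derivative of `F` in the coordinate `q`, taken within the domain `D`. -/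
noncomputable def partialDerivWithin (D : Set (ι → ℝ)) (q : ι) (F : (ι → ℝ) → ℝ) (z : ι → ℝ) : ℝ :=
  fderivWithin ℝ F D z (Pi.single q 1)

theorem contDiffOn_iterate_partialDerivWithin [Fintype ι] {D : Set (ι → ℝ)}
    (hD : UniqueDiffOn ℝ D) (q : ι) {F : (ι → ℝ) → ℝ} {m k : ℕ}
    (hF : ContDiffOn ℝ ((m + k : ℕ) : WithTop ℕ∞) F D) :
    ContDiffOn ℝ m ((partialDerivWithin D q)^[k] F) D := by
  induction k generalizing F with
  | zero => exact hF
  | succ k ih =>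
    rw [Function.iterate_succ_apply]
    exact ih ((hF.fderivWithin hD (by norm_cast)).clm_apply contDiffOn_const)

theorem hasDerivWithinAt_comp_update [Finite ι] {a b z : ι → ℝ} {q : ι} {F : (ι → ℝ) → ℝ}
    (hF : DifferentiableOn ℝ F (Set.Icc a b)) (hz : z ∈ Set.Icc a b) {u : ℝ}
    (hu : u ∈ Set.Icc (a q) (b q)) :
    HasDerivWithinAt (fun u => F (Function.update z q u))
      (partialDerivWithin (Set.Icc a b) q F (Function.update z q u)) (Set.Icc (a q) (b q)) u := by
  have := Fintype.ofFinite ι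
  exact (hF _ (update_mem_Icc hz hu)).hasFDerivWithinAt.comp_hasDerivWithinAt u
    (hasDerivAt_update z q u).hasDerivWithinAt fun _ hv => update_mem_Icc hz hv

end PartialDerivative

section TensorError

variable {ι κ : Type*} [Fintype ι]

/-- The index sets `s q` select `M` distinct nodes per coordinate of the box `[a, b]`, all within
distance `d` of the corresponding coordinate of the point `y` of the box. -/
structure IsTensorStencil (a b : ι → ℝ) (M : ℕ) (d : ℝ) (s : ι → Finset κ) (x : ι → κ → ℝ)
    (y : ι → ℝ) : Prop where
  nonneg : 0 ≤ d
  card_eq : ∀ q, #(s q) = M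
  injOn : ∀ q, Set.InjOn (x q) (s q)
  node_mem : ∀ q, ∀ k ∈ s q, x q k ∈ Set.Icc (a q) (b q)
  point_mem : y ∈ Set.Icc a b
  dist_le : ∀ q, ∀ k ∈ s q, |y q - x q k| ≤ d

variable {a b y : ι → ℝ} {M : ℕ} {d : ℝ} {s : ι → Finset κ} {x : ι → κ → ℝ}

theorem IsTensorStencil.min_norm (h : IsTensorStencil a b M d s x y) :
    IsTensorStencil a b M (min d ‖b - a‖) s x y where
  nonneg := le_min h.nonneg (norm_nonneg _)
  card_eq := h.card_eq
  injOn := h.injOn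
  node_mem := h.node_mem
  point_mem := h.point_mem
  dist_le q k hk := le_min (h.dist_le q k hk) <| calc
    |y q - x q k| ≤ b q - a q :=
      Real.dist_le_of_mem_Icc ⟨h.point_mem.1 q, h.point_mem.2 q⟩ (h.node_mem q k hk)
    _ ≤ ‖b - a‖ := (le_abs_self _).trans (norm_le_pi_norm (b - a) q)

variable [DecidableEq ι] [DecidableEq κ] {S : Finset ι} {q : ι} {F : (ι → ℝ) → ℝ} {z : ι → ℝ}

theorem IsTensorStencil.hasDerivWithinAt_partialTensorLag (h : IsTensorStencil a b M d s x y)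
    (hq : q ∉ S) (hF : DifferentiableOn ℝ F (Set.Icc a b)) (hz : z ∈ Set.Icc a b) {u : ℝ}
    (hu : u ∈ Set.Icc (a q) (b q)) :
    HasDerivWithinAt (fun u => partialTensorLag s x y S F (Function.update z q u))
      (partialTensorLag s x y S (partialDerivWithin (Set.Icc a b) q F) (Function.update z q u))
      (Set.Icc (a q) (b q)) u := by
  simp only [partialTensorLag, ← update_piecewise_of_notMem _ _ _ hq]
  refine HasDerivWithinAt.fun_sum fun l hl => (hasDerivWithinAt_comp_update hF ?_ hu).mul_const _
  have hnode := fun p => h.node_mem p (l p) (Fintype.mem_piFinset.1 hl p)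
  exact S.piecewise_mem_Icc_of_mem_of_mem ⟨fun p => (hnode p).1, fun p => (hnode p).2⟩ hz

theorem IsTensorStencil.exists_partialTensorLag_sub_insert_eq (hab : ∀ q, a q < b q) (hM : 0 < M)
    (h : IsTensorStencil a b M d s x y) (hq : q ∉ S) (hF : ContDiffOn ℝ M F (Set.Icc a b))
    (hz : z ∈ Set.Icc a b) :
    ∃ ξ ∈ Set.Icc (a q) (b q),
      partialTensorLag s x y S F (Function.update z q (y q)) -
          partialTensorLag s x y (insert q S) F z =
        partialTensorLag s x y S ((partialDerivWithin (Set.Icc a b) q)^[M] F)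
          (Function.update z q ξ) / M.factorial * ∏ k ∈ s q, (y q - x q k) := by
  have hs : (s q).Nonempty := card_pos.1 (h.card_eq q ▸ hM)
  rw [partialTensorLag_insert hq (h.injOn q) hs, ← h.card_eq q]
  refine exists_sub_eval_interpolate_eq_s14 (g := fun k u => partialTensorLag s x y S
    ((partialDerivWithin (Set.Icc a b) q)^[k] F) (Function.update z q u)) (fun k hk u hu => ?_)
    (h.injOn q) (h.node_mem q) ⟨h.point_mem.1 q, h.point_mem.2 q⟩
  rw [Function.iterate_succ_apply']
  have hk : 1 + k ≤ M := by rw [h.card_eq q] at hk; lia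
  exact h.hasDerivWithinAt_partialTensorLag hq
    ((contDiffOn_iterate_partialDerivWithin (uniqueDiffOn_Icc_pi hab) q
      (hF.of_le (by exact_mod_cast hk))).differentiableOn (by norm_num)) hz hu

/-- Tensor-product interpolation of `F` in the coordinates `S` on stencils with `M` nodes per
coordinate is accurate of order `M`, uniformly on the box `[a, b]`. The stencils are indexed by
`κ`. -/
def IsAccurateOnStencils (κ : Type*) [DecidableEq κ] (a b : ι → ℝ) (M : ℕ) (S : Finset ι)
    (F : (ι → ℝ) → ℝ) : Prop :=
  ∃ K, 0 ≤ K ∧ ∀ (s : ι → Finset κ) (x : ι → κ → ℝ) (y : ι → ℝ) (d : ℝ),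
    IsTensorStencil a b M d s x y →
      ∀ z ∈ Set.Icc a b, |partialTensorLag s x y S F z - F (S.piecewise y z)| ≤ K * d ^ M

theorem IsAccurateOnStencils.exists_abs_partialTensorLag_le
    (hacc : IsAccurateOnStencils κ a b M S F) (hF : ContinuousOn F (Set.Icc a b)) :
    ∃ C, 0 ≤ C ∧ ∀ (s : ι → Finset κ) (x : ι → κ → ℝ) (y : ι → ℝ) (d : ℝ),
      IsTensorStencil a b M d s x y → ∀ z ∈ Set.Icc a b, |partialTensorLag s x y S F z| ≤ C := by
  obtain ⟨K, hK, hacc⟩ := hacc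
  obtain ⟨C, hC⟩ := isCompact_Icc.exists_bound_of_continuousOn hF
  refine ⟨K * ‖b - a‖ ^ M + |C|, by positivity, fun s x y d h z hz => ?_⟩
  calc |partialTensorLag s x y S F z|
      ≤ |partialTensorLag s x y S F z - F (S.piecewise y z)| + |F (S.piecewise y z)| := by
        linarith [abs_sub_abs_le_abs_sub (partialTensorLag s x y S F z) (F (S.piecewise y z))]
    _ ≤ K * min d ‖b - a‖ ^ M + |C| := add_le_add (hacc s x y _ h.min_norm z hz)
        ((hC _ (S.piecewise_mem_Icc_of_mem_of_mem h.point_mem hz)).trans (le_abs_self C))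
    _ ≤ K * ‖b - a‖ ^ M + |C| := by
        gcongr
        · exact h.min_norm.nonneg
        · exact min_le_right _ _

theorem IsAccurateOnStencils.insert_coord (hab : ∀ q, a q < b q) (hM : 0 < M) (hq : q ∉ S)
    (hF : ContDiffOn ℝ M F (Set.Icc a b)) (hacc : IsAccurateOnStencils κ a b M S F)
    (hderiv : IsAccurateOnStencils κ a b M S ((partialDerivWithin (Set.Icc a b) q)^[M] F)) :
    IsAccurateOnStencils κ a b M (insert q S) F := by
  obtain ⟨C, hC, hbound⟩ := hderiv.exists_abs_partialTensorLag_le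
    (contDiffOn_iterate_partialDerivWithin (m := 0) (uniqueDiffOn_Icc_pi hab) q
      (by simpa using hF)).continuousOn
  obtain ⟨K, hK, hacc⟩ := hacc
  refine ⟨C + K, add_nonneg hC hK, fun s x y d h z hz => ?_⟩
  have hzy : Function.update z q (y q) ∈ Set.Icc a b :=
    update_mem_Icc hz ⟨h.point_mem.1 q, h.point_mem.2 q⟩
  obtain ⟨ξ, hξ, hrem⟩ := h.exists_partialTensorLag_sub_insert_eq hab hM hq hF hz
  have hnodal : |∏ k ∈ s q, (y q - x q k)| ≤ d ^ M := by
    rw [abs_prod, ← h.card_eq q, ← prod_const]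
    exact prod_le_prod (fun _ _ => abs_nonneg _) (h.dist_le q)
  have hnew : |partialTensorLag s x y (insert q S) F z -
      partialTensorLag s x y S F (Function.update z q (y q))| ≤ C * d ^ M := by
    rw [abs_sub_comm, hrem, abs_mul, abs_div, Nat.abs_cast]
    gcongr
    exact (div_le_self (abs_nonneg _) (Nat.one_le_cast.2 M.factorial_pos)).trans
      (hbound s x y d h _ (update_mem_Icc hz hξ))
  have hold := hacc s x y d h _ hzy
  rw [← update_piecewise_of_notMem _ _ _ hq, ← piecewise_insert] at hold
  rw [add_mul]
  exact (abs_sub_le _ _ _).trans (add_le_add hnew hold)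

theorem isAccurateOnStencils_of_contDiffOn (κ : Type*) [DecidableEq κ] (hab : ∀ q, a q < b q)
    (hM : 0 < M) (hF : ContDiffOn ℝ ((#S * M : ℕ) : WithTop ℕ∞) F (Set.Icc a b)) :
    IsAccurateOnStencils κ a b M S F := by
  induction S using Finset.induction generalizing F with
  | empty =>
    refine ⟨0, le_rfl, fun s x y d h z _ => ?_⟩
    have hs : ∀ q, (s q).Nonempty := fun q => card_pos.1 (h.card_eq q ▸ hM)
    simp [partialTensorLag_empty h.injOn hs]
  | insert q S hq ih =>
    rw [card_insert_of_notMem hq, add_mul, one_mul] at hF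
    exact .insert_coord hab hM hq (hF.of_le (by exact_mod_cast Nat.le_add_left _ _))
      (ih (hF.of_le (by exact_mod_cast Nat.le_add_right _ _)))
      (ih (contDiffOn_iterate_partialDerivWithin (uniqueDiffOn_Icc_pi hab) q hF))

end TensorError

section TensorLagEval

variable {n : ℕ} {a b : Fin n → ℝ} {f : (Fin n → ℝ) → ℝ}

theorem tensorLagEval_eq_sum_lagrangeWeight (s : Fin n → Finset ℕ) (x : Fin n → ℕ → ℝ)
    (f : (Fin n → ℝ) → ℝ) (y : Fin n → ℝ) :
    tensorLagEval n s x f y = ∑ l ∈ Fintype.piFinset s, f (fun q => x q (l q)) *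
      ∏ q, lagrangeWeight (s q) (x q) (y q) (l q) :=
  sum_congr rfl fun l hl => by
    simp only [lagrangeWeight_eq_prod (Fintype.mem_piFinset.1 hl _)]

theorem exists_abs_tensorLagEval_sub_le (hab : ∀ q, a q < b q) {m M : ℕ} (hM : 0 < M) (hmM : m ≤ M)
    (hf : ContDiffOn ℝ ((n * M : ℕ) : WithTop ℕ∞) f (Set.Icc a b)) :
    ∃ K, 0 ≤ K ∧ ∀ (s : Fin n → Finset ℕ) (x : Fin n → ℕ → ℝ) (y : Fin n → ℝ) (d : ℝ),
      IsTensorStencil a b M d s x y → |tensorLagEval n s x f y - f y| ≤ K * d ^ m := by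
  obtain ⟨K, hK, hacc⟩ :=
    isAccurateOnStencils_of_contDiffOn ℕ (S := univ) hab hM (by simpa using hf)
  refine ⟨K * ‖b - a‖ ^ (M - m), by positivity, fun s x y d h => ?_⟩
  have hmin := hacc s x y _ h.min_norm y h.point_mem
  rw [partialTensorLag_univ, ← tensorLagEval_eq_sum_lagrangeWeight, piecewise_univ] at hmin
  calc |tensorLagEval n s x f y - f y| ≤ K * min d ‖b - a‖ ^ M := hmin
    _ = K * (min d ‖b - a‖ ^ (M - m) * min d ‖b - a‖ ^ m) := by
        rw [← pow_add, Nat.sub_add_cancel hmM]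
    _ ≤ K * (‖b - a‖ ^ (M - m) * d ^ m) := by
        have hd := h.min_norm.nonneg
        gcongr
        · exact min_le_right _ _
        · exact min_le_left _ _
    _ = K * ‖b - a‖ ^ (M - m) * d ^ m := (mul_assoc _ _ _).symm

theorem exists_forall_card_abs_tensorLagEval_sub_le (hab : ∀ q, a q < b q) {m M : ℕ} (hm : 0 < m)
    (hf : ContDiffOn ℝ ((n * M : ℕ) : WithTop ℕ∞) f (Set.Icc a b)) :
    ∃ K, 0 ≤ K ∧ ∀ L ∈ Icc m M, ∀ (s : Fin n → Finset ℕ) (x : Fin n → ℕ → ℝ) (y : Fin n → ℝ)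
      (d : ℝ), IsTensorStencil a b L d s x y → |tensorLagEval n s x f y - f y| ≤ K * d ^ m := by
  have hcard : ∀ L ∈ Icc m M, ∃ K, 0 ≤ K ∧ ∀ (s : Fin n → Finset ℕ) (x : Fin n → ℕ → ℝ)
      (y : Fin n → ℝ) (d : ℝ), IsTensorStencil a b L d s x y →
        |tensorLagEval n s x f y - f y| ≤ K * d ^ m := fun L hL => by
    obtain ⟨hmL, hLM⟩ := mem_Icc.1 hL
    exact exists_abs_tensorLagEval_sub_le hab (hm.trans_le hmL) hmL
      (hf.of_le (by exact_mod_cast Nat.mul_le_mul_left n hLM))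
  choose! K hK hbound using hcard
  refine ⟨∑ L ∈ Icc m M, K L, sum_nonneg hK, fun L hL s x y d h => ?_⟩
  have hd := h.nonneg
  refine (hbound L hL s x y d h).trans ?_
  gcongr
  exact single_le_sum hK hL

theorem tensorLagEval_eq_sum_of_subset {s σ : Fin n → Finset ℕ} (hσ : ∀ q, σ q ⊆ s q)
    (x : Fin n → ℕ → ℝ) (f : (Fin n → ℝ) → ℝ) (y : Fin n → ℝ) :
    tensorLagEval n σ x f y = ∑ l ∈ Fintype.piFinset s, f (fun q => x q (l q)) *
      ∏ q, lagrangeWeight (σ q) (x q) (y q) (l q) := by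
  rw [tensorLagEval_eq_sum_lagrangeWeight]
  refine sum_subset (Fintype.piFinset_subset _ _ hσ) fun l _ hl => ?_
  obtain ⟨q, hq⟩ := not_forall.1 (mt Fintype.mem_piFinset.2 hl)
  rw [prod_eq_zero (mem_univ q) (lagrangeWeight_of_notMem hq _), mul_zero]

theorem tensorLagEval_eq_sum_of_lagrangeWeight_eq_sum {s : Fin n → Finset ℕ} {V : Finset ℕ}
    {σ : Fin n → ℕ → Finset ℕ} {c : Fin n → ℕ → ℝ} {x : Fin n → ℕ → ℝ} {y : Fin n → ℝ}
    (hσ : ∀ q, ∀ e ∈ V, σ q e ⊆ s q)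
    (hw : ∀ q k, lagrangeWeight (s q) (x q) (y q) k =
      ∑ e ∈ V, c q e * lagrangeWeight (σ q e) (x q) (y q) k) (f : (Fin n → ℝ) → ℝ) :
    tensorLagEval n s x f y = ∑ v ∈ Fintype.piFinset fun _ : Fin n => V,
      (∏ q, c q (v q)) * tensorLagEval n (fun q => σ q (v q)) x f y := by
  calc tensorLagEval n s x f y
      = ∑ l ∈ Fintype.piFinset s, ∑ v ∈ Fintype.piFinset fun _ : Fin n => V,
          (∏ q, c q (v q)) * (f (fun q => x q (l q)) *
            ∏ q, lagrangeWeight (σ q (v q)) (x q) (y q) (l q)) := by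
        rw [tensorLagEval_eq_sum_lagrangeWeight]
        refine sum_congr rfl fun l _ => ?_
        simp only [hw, prod_univ_sum, prod_mul_distrib, mul_sum]
        exact sum_congr rfl fun v _ => mul_left_comm _ _ _
    _ = _ := by
        rw [sum_comm]
        refine sum_congr rfl fun v hv => ?_
        rw [← mul_sum, tensorLagEval_eq_sum_of_subset fun q =>
          hσ q (v q) (Fintype.mem_piFinset.1 hv q)]

/-- The value at `y` of the tensor-product Lagrange interpolant of `f` on the `l + 1` consecutive
nodes `x q (p q), …, x q (p q + l)` in each coordinate `q`. -/
noncomputable def stencilLagEval (x : Fin n → ℕ → ℝ) (f : (Fin n → ℝ) → ℝ) (y : Fin n → ℝ) (l : ℕ)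
    (p : Fin n → ℕ) : ℝ :=
  tensorLagEval n (fun q => Icc (p q) (p q + l)) x f y

theorem stencilLagEval_succ {x : Fin n → ℕ → ℝ} {p : Fin n → ℕ} {l : ℕ}
    (hx : ∀ q, Set.InjOn (x q) (Icc (p q) (p q + l + 1) : Finset ℕ)) (f : (Fin n → ℝ) → ℝ)
    (y : Fin n → ℝ) :
    stencilLagEval x f y (l + 1) p =
      ∑ v ∈ Fintype.piFinset fun _ : Fin n => ({0, 1} : Finset ℕ),
        (∏ q, nevilleWeight (x q (p q)) (x q (p q + l + 1)) (y q) (v q)) *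
          stencilLagEval x f y l (fun q => p q + v q) := by
  refine tensorLagEval_eq_sum_of_lagrangeWeight_eq_sum
    (σ := fun q e => Icc (p q + e) (p q + e + l)) (fun q e he => ?_) (fun q k => ?_) f
  · have : e ≤ 1 := by simp only [mem_insert, mem_singleton] at he; lia
    exact Icc_subset_Icc (by lia) (by lia)
  · have hlast : (Icc (p q) (p q + l + 1)).erase (p q + l + 1) = Icc (p q + 0) (p q + 0 + l) := by
      ext; simp only [mem_erase, mem_Icc]; lia
    have hfirst : (Icc (p q) (p q + l + 1)).erase (p q) = Icc (p q + 1) (p q + 1 + l) := by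
      ext; simp only [mem_erase, mem_Icc]; lia
    rw [sum_pair zero_ne_one, ← hlast, ← hfirst]
    exact lagrangeWeight_eq_sum_nevilleWeight_mul (hx q) (by simp; lia) (by simp; lia) (by lia) _ _

theorem sum_prod_nevilleWeight (α β y : Fin n → ℝ) :
    ∑ v ∈ Fintype.piFinset fun _ : Fin n => ({0, 1} : Finset ℕ),
      ∏ q, nevilleWeight (α q) (β q) (y q) (v q) = 1 := by
  rw [← prod_univ_sum (fun _ => {0, 1}) fun q e => nevilleWeight (α q) (β q) (y q) e]
  exact prod_eq_one fun q _ => sum_nevilleWeight _ _ _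

end TensorLagEval

section NonlinearWeights

theorem abs_sub_sum_mul_le {ι : Type*} {V : Finset ι} {c G : ι → ℝ} {δ g : ℝ}
    (hc : ∀ v ∈ V, 0 ≤ c v) (hc1 : ∑ v ∈ V, c v = 1) (hG : ∀ v ∈ V, |g - G v| ≤ δ * G v) :
    |g - ∑ v ∈ V, c v * G v| ≤ δ * ∑ v ∈ V, c v * G v := by
  have hmean : g - ∑ v ∈ V, c v * G v = ∑ v ∈ V, c v * (g - G v) := by
    simp only [mul_sub, sum_sub_distrib, ← sum_mul, hc1, one_mul]
  rw [hmean, mul_sum]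
  refine (abs_sum_le_sum_abs _ _).trans (sum_le_sum fun v hv => ?_)
  rw [abs_mul, abs_of_nonneg (hc v hv), mul_left_comm]
  exact mul_le_mul_of_nonneg_left (hG v hv) (hc v hv)

theorem abs_sum_mul_sub_sum_mul_le {ι : Type*} {V : Finset ι} {c ω P Q : ι → ℝ} {F δ D E : ℝ}
    (hc1 : ∑ v ∈ V, c v = 1) (hω : ∀ v ∈ V, 0 ≤ ω v) (hω1 : ∑ v ∈ V, ω v = 1)
    (hωc : ∀ v ∈ V, |ω v - c v| ≤ δ * c v) (hQP : ∀ v ∈ V, |Q v - P v| ≤ D)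
    (hPF : ∀ v ∈ V, |P v - F| ≤ E) :
    |∑ v ∈ V, ω v * Q v - ∑ v ∈ V, c v * P v| ≤ D + δ * E := by
  -- Both families of weights add up to `1`, so the constant `F` can be subtracted from each `P v`.
  have hsplit : ∑ v ∈ V, ω v * Q v - ∑ v ∈ V, c v * P v =
      ∑ v ∈ V, ω v * (Q v - P v) + ∑ v ∈ V, (ω v - c v) * (P v - F) := by
    simp only [mul_sub, sub_mul, sum_sub_distrib, ← sum_mul, hω1, hc1]
    ring
  have hQ : |∑ v ∈ V, ω v * (Q v - P v)| ≤ D := calc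
    _ ≤ ∑ v ∈ V, ω v * D := (abs_sum_le_sum_abs _ _).trans (sum_le_sum fun v hv => by
      rw [abs_mul, abs_of_nonneg (hω v hv)]
      exact mul_le_mul_of_nonneg_left (hQP v hv) (hω v hv))
    _ = D := by rw [← sum_mul, hω1, one_mul]
  have hω' : |∑ v ∈ V, (ω v - c v) * (P v - F)| ≤ δ * E := calc
    _ ≤ ∑ v ∈ V, δ * c v * E := (abs_sum_le_sum_abs _ _).trans (sum_le_sum fun v hv => by
      rw [abs_mul]
      exact mul_le_mul (hωc v hv) (hPF v hv) (abs_nonneg _) ((abs_nonneg _).trans (hωc v hv)))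
    _ = δ * E := by rw [← sum_mul, ← mul_sum, hc1, mul_one]
  rw [hsplit]
  exact (abs_add_le _ _).trans (add_le_add hQ hω')

theorem abs_sum_div_sum_mul_sub_sum_mul_le {ι : Type*} {V : Finset ι} {c G P Q : ι → ℝ}
    {F δ D E : ℝ} (hc : ∀ v ∈ V, 0 ≤ c v) (hc1 : ∑ v ∈ V, c v = 1) (hG : ∀ v ∈ V, 0 < G v)
    (hδ : ∀ v ∈ V, ∀ w ∈ V, |G v - G w| ≤ δ * G w) (hQP : ∀ v ∈ V, |Q v - P v| ≤ D)
    (hPF : ∀ v ∈ V, |P v - F| ≤ E) :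
    |∑ v ∈ V, c v * G v / (∑ w ∈ V, c w * G w) * Q v - ∑ v ∈ V, c v * P v| ≤ D + δ * E := by
  have hcG : ∀ v ∈ V, 0 ≤ c v * G v := fun v hv => mul_nonneg (hc v hv) (hG v hv).le
  have hT : 0 < ∑ w ∈ V, c w * G w := by
    obtain ⟨v, hv, hcv⟩ := exists_ne_zero_of_sum_ne_zero (hc1 ▸ one_ne_zero)
    exact sum_pos' hcG ⟨v, hv, mul_pos ((hc v hv).lt_of_ne' hcv) (hG v hv)⟩
  refine abs_sum_mul_sub_sum_mul_le hc1 (fun v hv => div_nonneg (hcG v hv) hT.le)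
    (by rw [← sum_div, div_self hT.ne']) (fun v hv => ?_) hQP hPF
  have hrel := abs_sub_sum_mul_le hc hc1 (hδ v hv)
  rw [mul_div_assoc, ← mul_sub_one, div_sub_one hT.ne', abs_mul, abs_div, abs_of_pos hT,
    abs_of_nonneg (hc v hv), mul_comm]
  exact mul_le_mul_of_nonneg_right ((div_le_iff₀ hT).2 hrel) (hc v hv)

theorem exists_abs_rpow_sub_rpow_le (t : ℝ) {A : ℝ} (hA : 0 < A) :
    ∃ κ, 0 ≤ κ ∧ ∀ η > 0, ∀ y ∈ Set.Icc η (A * η), ∀ z ∈ Set.Icc η (A * η),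
      |y ^ t - z ^ t| ≤ κ * (|y - z| / η) * z ^ t := by
  have hsmooth : ContDiffOn ℝ 1 (fun u : ℝ => u ^ t) (Set.Icc A⁻¹ A) := fun u hu =>
    (Real.contDiffAt_rpow_const_of_ne ((inv_pos.2 hA).trans_le hu.1).ne').contDiffWithinAt
  obtain ⟨L, hL⟩ := hsmooth.exists_lipschitzOnWith one_ne_zero (convex_Icc _ _) isCompact_Icc
  refine ⟨L, L.2, fun η hη y hy z hz => ?_⟩
  have hy0 : 0 < y := hη.trans_le hy.1
  have hz0 : 0 < z := hη.trans_le hz.1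
  have hA1 : 1 ≤ A := le_of_mul_le_mul_right (by linarith [hy.1, hy.2]) hη
  have hquot : y / z ∈ Set.Icc A⁻¹ A := by
    constructor
    · rw [inv_le_comm₀ hA (div_pos hy0 hz0), inv_div, div_le_iff₀ hy0]
      exact hz.2.trans (mul_le_mul_of_nonneg_left hy.1 hA.le)
    · rw [div_le_iff₀ hz0]
      exact hy.2.trans (mul_le_mul_of_nonneg_left hz.1 hA.le)
  have hlip : |(y / z) ^ t - 1| ≤ L * |y / z - 1| := by
    simpa [Real.dist_eq] using hL.dist_le_mul _ hquot 1 ⟨inv_le_one_of_one_le₀ hA1, hA1⟩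
  have hfactor : y ^ t - z ^ t = ((y / z) ^ t - 1) * z ^ t := by
    rw [Real.div_rpow hy0.le hz0.le, sub_one_mul, div_mul_cancel₀ _ (by positivity)]
  rw [hfactor, abs_mul, abs_of_pos (by positivity : 0 < z ^ t)]
  gcongr
  refine hlip.trans ?_
  rw [div_sub_one hz0.ne', abs_div, abs_of_pos hz0]
  gcongr
  exact hz.1

theorem exists_abs_inv_rpow_sub_inv_rpow_le (t : ℝ) {A : ℝ} (hA : 0 ≤ A) :
    ∃ κ, 0 ≤ κ ∧ ∀ η > 0, ∀ u ∈ Set.Icc 0 (A * η), ∀ w ∈ Set.Icc 0 (A * η),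
      |((η + u) ^ t)⁻¹ - ((η + w) ^ t)⁻¹| ≤ κ * (|u - w| / η) * ((η + w) ^ t)⁻¹ := by
  obtain ⟨κ, hκ, hbound⟩ := exists_abs_rpow_sub_rpow_le (-t) (by linarith : 0 < 1 + A)
  refine ⟨κ, hκ, fun η hη u hu w hw => ?_⟩
  have hmem : ∀ {u}, u ∈ Set.Icc 0 (A * η) → η + u ∈ Set.Icc η ((1 + A) * η) := fun hu =>
    ⟨by linarith [hu.1], by linarith [hu.2]⟩
  simpa [Real.rpow_neg (hη.le.trans (hmem hu).1), Real.rpow_neg (hη.le.trans (hmem hw).1)] using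
    hbound η hη _ (hmem hu) _ (hmem hw)

end NonlinearWeights

section Grid

/-- A grid `x 0 < … < x N` in the interval `[a, b]` whose mesh size is at most `h`; the values
`x k` for `N < k` are irrelevant. -/
structure IsGrid (a b : ℝ) (N : ℕ) (x : ℕ → ℝ) (h : ℝ) : Prop where
  left_le : a ≤ x 0
  le_right : x N ≤ b
  strictMonoOn : StrictMonoOn x (Set.Iic N)
  mesh_le : ∀ k, 1 ≤ k → k ≤ N → x k - x (k - 1) ≤ h

namespace IsGrid

variable {a b h : ℝ} {N : ℕ} {x : ℕ → ℝ}

theorem mono (hx : IsGrid a b N x h) {k k' : ℕ} (hk : k ≤ k') (hk' : k' ≤ N) : x k ≤ x k' :=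
  hx.strictMonoOn.monotoneOn (hk.trans hk') hk' hk

theorem mem_Icc (hx : IsGrid a b N x h) {k : ℕ} (hk : k ≤ N) : x k ∈ Set.Icc a b :=
  ⟨hx.left_le.trans (hx.mono k.zero_le hk), (hx.mono hk le_rfl).trans hx.le_right⟩

theorem add_sub_le (hx : IsGrid a b N x h) {k d : ℕ} (hk : k + d ≤ N) :
    x (k + d) - x k ≤ d * h := by
  induction d with
  | zero => simp
  | succ d ih =>
    have hlast : x (k + (d + 1)) - x (k + d) ≤ h := hx.mesh_le (k + (d + 1)) (by lia) hk
    have hrest := ih (by lia)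
    push_cast
    linarith

theorem abs_sub_le (hx : IsGrid a b N x h) {p l k : ℕ} (hp : p + l ≤ N) {y : ℝ}
    (hy : y ∈ Set.Icc (x p) (x (p + l))) (hk : k ∈ Icc p (p + l)) : |y - x k| ≤ l * h := by
  obtain ⟨hpk, hkl⟩ := Finset.mem_Icc.1 hk
  exact (Real.dist_le_of_mem_Icc hy ⟨hx.mono hpk (hkl.trans hp), hx.mono hkl hp⟩).trans
    (hx.add_sub_le hp)

end IsGrid

/-- The grids of the box `[a, b]` with mesh size at most `h`, and the point `y` of the cell with
upper corner index `i`, around which there is room for stencils of `2 * r` nodes. -/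
structure IsWenoGrid {n : ℕ} (a b : Fin n → ℝ) (r : ℕ) (N : Fin n → ℕ) (x : Fin n → ℕ → ℝ) (h : ℝ)
    (i : Fin n → ℕ) (y : Fin n → ℝ) : Prop where
  mesh_pos : 0 < h
  isGrid : ∀ q, IsGrid (a q) (b q) (N q) (x q) h
  le_index : ∀ q, r ≤ i q
  index_add_le : ∀ q, i q + r ≤ N q + 1
  mem_cell : ∀ q, y q ∈ Set.Icc (x q (i q - 1)) (x q (i q))

namespace IsWenoGrid

variable {n r : ℕ} {a b : Fin n → ℝ} {N : Fin n → ℕ} {x : Fin n → ℕ → ℝ} {h : ℝ} {i : Fin n → ℕ}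
  {y : Fin n → ℝ} {l : ℕ} {j : Fin n → ℕ}

theorem last_index_le (hx : IsWenoGrid a b r N x h i y) {q : Fin n} (hj : j q + l + 1 ≤ 2 * r) :
    i q - r + j q + l ≤ N q := by
  have := hx.le_index q
  have := hx.index_add_le q
  lia

theorem mem_Icc_stencil (hx : IsWenoGrid a b r N x h i y) (hl : r ≤ l) {q : Fin n}
    (hj : j q + l + 1 ≤ 2 * r) :
    y q ∈ Set.Icc (x q (i q - r + j q)) (x q (i q - r + j q + l)) := by
  have hi := hx.le_index q
  have hN := hx.index_add_le q
  exact Set.Icc_subset_Icc ((hx.isGrid q).mono (by lia) (by lia))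
    ((hx.isGrid q).mono (by lia) (hx.last_index_le hj)) (hx.mem_cell q)

theorem isTensorStencil (hx : IsWenoGrid a b r N x h i y) (hl : r ≤ l)
    (hj : ∀ q, j q + l + 1 ≤ 2 * r) :
    IsTensorStencil a b (l + 1) (l * h)
      (fun q => Icc (i q - r + j q) (i q - r + j q + l)) x y where
  nonneg := mul_nonneg l.cast_nonneg hx.mesh_pos.le
  card_eq q := by rw [Nat.card_Icc]; lia
  injOn q := (hx.isGrid q).strictMonoOn.injOn.mono fun k hk =>
    (Finset.mem_Icc.1 hk).2.trans (hx.last_index_le (hj q))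
  node_mem q k hk := (hx.isGrid q).mem_Icc ((Finset.mem_Icc.1 hk).2.trans (hx.last_index_le (hj q)))
  point_mem := by
    have hcell := fun q => Set.Icc_subset_Icc
      ((hx.isGrid q).mem_Icc (by have := hx.last_index_le (hj q); lia)).1
      ((hx.isGrid q).mem_Icc (hx.last_index_le (hj q))).2 (hx.mem_Icc_stencil hl (hj q))
    exact ⟨fun q => (hcell q).1, fun q => (hcell q).2⟩
  dist_le q _ hk :=
    (hx.isGrid q).abs_sub_le (hx.last_index_le (hj q)) (hx.mem_Icc_stencil hl (hj q)) hk

end IsWenoGrid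

theorem exists_abs_stencilLagEval_sub_le {n : ℕ} {a b : Fin n → ℝ} (hab : ∀ q, a q < b q) {m r : ℕ}
    (hm : 0 < m) {f : (Fin n → ℝ) → ℝ}
    (hf : ContDiffOn ℝ ((n * (2 * r) : ℕ) : WithTop ℕ∞) f (Set.Icc a b)) :
    ∃ K, 0 ≤ K ∧ ∀ {N x h i y}, IsWenoGrid a b r N x h i y → ∀ (l : ℕ) (j : Fin n → ℕ),
      r ≤ l → m ≤ l + 1 → l + 1 ≤ 2 * r → (∀ q, j q + l + 1 ≤ 2 * r) →
        |stencilLagEval x f y l (fun q => i q - r + j q) - f y| ≤ K * h ^ m := by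
  obtain ⟨K, hK, hbound⟩ := exists_forall_card_abs_tensorLagEval_sub_le hab hm hf
  refine ⟨K * (2 * r) ^ m, by positivity, fun {N x h i y} hx l j hl hml hlr hj => ?_⟩
  have hh := hx.mesh_pos
  have hlr' : (l : ℝ) ≤ 2 * r := by exact_mod_cast (Nat.le_succ l).trans hlr
  calc |stencilLagEval x f y l (fun q => i q - r + j q) - f y|
      ≤ K * (l * h) ^ m :=
        hbound (l + 1) (mem_Icc.2 ⟨hml, hlr⟩) _ x y _ (hx.isTensorStencil hl hj)
    _ ≤ K * (2 * r * h) ^ m := by gcongr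
    _ = K * (2 * r) ^ m * h ^ m := by rw [mul_pow, mul_assoc]

end Grid

section ProgressiveWeno

variable {n r : ℕ} {x : Fin n → ℕ → ℝ} {i : Fin n → ℕ} {y : Fin n → ℝ} {h t : ℝ}
  {I : (Fin n → ℕ) → ℝ} {f : (Fin n → ℝ) → ℝ} {Q : ℕ → (Fin n → ℕ) → ℝ}

/-- The family `Q l j` satisfies the recursion that defines the progressive WENO values
`Q^l_j` of `f` at `y`. -/
structure IsProgressiveWeno (n r : ℕ) (x : Fin n → ℕ → ℝ) (i : Fin n → ℕ) (y : Fin n → ℝ)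
    (h t : ℝ) (I : (Fin n → ℕ) → ℝ) (f : (Fin n → ℝ) → ℝ) (Q : ℕ → (Fin n → ℕ) → ℝ) : Prop where
  init : ∀ k : Fin n → ℕ, (∀ q, k q < r) →
    Q r k = tensorLagEval n (fun q => Icc (i q - r + k q) (i q + k q)) x f y
  step : ∀ (l : ℕ) (j : Fin n → ℕ), r ≤ l → l + 2 ≤ 2 * r → (∀ q, j q + l + 2 ≤ 2 * r) →
    Q (l + 1) j =
      ∑ v ∈ Fintype.piFinset (fun _ : Fin n => ({0, 1} : Finset ℕ)),
        (wenoAlpha n r x i y h t I l j v /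
            ∑ w ∈ Fintype.piFinset (fun _ : Fin n => ({0, 1} : Finset ℕ)),
              wenoAlpha n r x i y h t I l j w) *
          Q l (fun q => j q + v q)

theorem wenoAlpha_eq_prod_nevilleWeight_mul (l : ℕ) (j v : Fin n → ℕ) :
    wenoAlpha n r x i y h t I l j v =
      (∏ q, nevilleWeight (x q (i q - r + j q)) (x q (i q - r + j q + l + 1)) (y q) (v q)) *
        ((h ^ 2 + I (fun q => j q + (l + 1 - r) * v q)) ^ t)⁻¹ :=
  div_eq_mul_inv _ _

namespace IsProgressiveWeno

variable {a b : Fin n → ℝ} {N : Fin n → ℕ} {F δ D E : ℝ}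

theorem abs_sub_stencilLagEval_step (hQ : IsProgressiveWeno n r x i y h t I f Q)
    (hx : IsWenoGrid a b r N x h i y) (hI : ∀ k : Fin n → ℕ, (∀ q, k q < r) → 0 ≤ I k)
    (hδ : ∀ k k' : Fin n → ℕ, (∀ q, k q < r) → (∀ q, k' q < r) →
      |((h ^ 2 + I k) ^ t)⁻¹ - ((h ^ 2 + I k') ^ t)⁻¹| ≤ δ * ((h ^ 2 + I k') ^ t)⁻¹)
    {l : ℕ} (hrl : r ≤ l) (hlr : l + 2 ≤ 2 * r)
    (hE : ∀ j : Fin n → ℕ, (∀ q, j q + l + 1 ≤ 2 * r) →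
      |stencilLagEval x f y l (fun q => i q - r + j q) - F| ≤ E)
    (hD : ∀ j : Fin n → ℕ, (∀ q, j q + l + 1 ≤ 2 * r) →
      |Q l j - stencilLagEval x f y l (fun q => i q - r + j q)| ≤ D)
    {j : Fin n → ℕ} (hj : ∀ q, j q + (l + 1) + 1 ≤ 2 * r) :
    |Q (l + 1) j - stencilLagEval x f y (l + 1) (fun q => i q - r + j q)| ≤ D + δ * E := by
  have hcube : ∀ v ∈ Fintype.piFinset fun _ : Fin n => ({0, 1} : Finset ℕ), ∀ q,
      v q = 0 ∨ v q = 1 := fun v hv q => by simpa using Fintype.mem_piFinset.1 hv q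
  have hsub : ∀ v ∈ Fintype.piFinset fun _ : Fin n => ({0, 1} : Finset ℕ), ∀ q,
      j q + v q + l + 1 ≤ 2 * r := fun v hv q => by
    have := hcube v hv q
    have := hj q
    lia
  have hindicator : ∀ v ∈ Fintype.piFinset fun _ : Fin n => ({0, 1} : Finset ℕ), ∀ q,
      j q + (l + 1 - r) * v q < r := fun v hv q => by
    have := hj q
    rcases hcube v hv q with h0 | h1
    · rw [h0]; lia
    · rw [h1]; lia
  have hpos : ∀ k : Fin n → ℕ, (∀ q, k q < r) → 0 < ((h ^ 2 + I k) ^ t)⁻¹ := fun k hk =>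
    inv_pos.2 (Real.rpow_pos_of_pos (add_pos_of_pos_of_nonneg (pow_pos hx.mesh_pos 2) (hI k hk)) t)
  rw [hQ.step l j hrl hlr hj,
    stencilLagEval_succ (hx.isTensorStencil (hrl.trans l.le_succ) hj).injOn]
  simp only [wenoAlpha_eq_prod_nevilleWeight_mul]
  refine abs_sum_div_sum_mul_sub_sum_mul_le (F := F)
    (fun v _ => prod_nonneg fun q _ =>
      nevilleWeight_nonneg (hx.mem_Icc_stencil (hrl.trans l.le_succ) (hj q)) _)
    (sum_prod_nevilleWeight _ _ _) (fun v hv => hpos _ (hindicator v hv))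
    (fun v hv w hw => hδ _ _ (hindicator v hv) (hindicator w hw)) (fun v hv => ?_) (fun v hv => ?_)
  · simpa only [add_assoc] using hD _ (hsub v hv)
  · simpa only [add_assoc] using hE _ (hsub v hv)

theorem abs_sub_stencilLagEval_le (hQ : IsProgressiveWeno n r x i y h t I f Q)
    (hx : IsWenoGrid a b r N x h i y) (hI : ∀ k : Fin n → ℕ, (∀ q, k q < r) → 0 ≤ I k)
    (hδ : ∀ k k' : Fin n → ℕ, (∀ q, k q < r) → (∀ q, k' q < r) →
      |((h ^ 2 + I k) ^ t)⁻¹ - ((h ^ 2 + I k') ^ t)⁻¹| ≤ δ * ((h ^ 2 + I k') ^ t)⁻¹)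
    (hE : ∀ l (j : Fin n → ℕ), r ≤ l → l + 1 ≤ 2 * r → (∀ q, j q + l + 1 ≤ 2 * r) →
      |stencilLagEval x f y l (fun q => i q - r + j q) - F| ≤ E)
    {d : ℕ} (hd : r + d + 1 ≤ 2 * r) {j : Fin n → ℕ} (hj : ∀ q, j q + (r + d) + 1 ≤ 2 * r) :
    |Q (r + d) j - stencilLagEval x f y (r + d) (fun q => i q - r + j q)| ≤ d * (δ * E) := by
  induction d generalizing j with
  | zero =>
    have hstencil : ∀ q, i q + j q = i q - r + j q + r := fun q => by
      have := hx.le_index q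
      lia
    simp [hQ.init j fun q => by have := hj q; lia, stencilLagEval, hstencil]
  | succ d ih =>
    have hstep := hQ.abs_sub_stencilLagEval_step hx hI hδ (r.le_add_right d) hd
      (fun j => hE (r + d) j (r.le_add_right d) (by lia)) (fun j => ih (by lia)) hj
    rwa [Nat.cast_succ, add_one_mul]

end IsProgressiveWeno

end ProgressiveWeno

theorem stmt14_general (n r : ℕ) (hr : 1 ≤ r) (t : ℝ) (a b : Fin n → ℝ) (hab : ∀ q, a q < b q)
    (f : (Fin n → ℝ) → ℝ) (hf : ContDiffOn ℝ (2 * n * r) f (Set.Icc a b)) (A : ℝ) (hA : 0 ≤ A) :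
    ∃ B > 0, ∀ (N : Fin n → ℕ) (x : Fin n → ℕ → ℝ) (h : ℝ) (i : Fin n → ℕ) (y : Fin n → ℝ)
      (I : (Fin n → ℕ) → ℝ) (Q : ℕ → (Fin n → ℕ) → ℝ),
      IsWenoGrid a b r N x h i y →
      (∀ k : Fin n → ℕ, (∀ q, k q < r) → 0 ≤ I k ∧ I k ≤ A * h ^ 2) →
      (∀ k k' : Fin n → ℕ, (∀ q, k q < r) → (∀ q, k' q < r) → |I k - I k'| ≤ A * h ^ (r + 1)) →
      IsProgressiveWeno n r x i y h t I f Q →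
      |Q (2 * r - 1) (fun _ => 0) - f y| ≤ B * h ^ (2 * r) := by
  have hf' : ContDiffOn ℝ ((n * (2 * r) : ℕ) : WithTop ℕ∞) f (Set.Icc a b) :=
    hf.of_le (by norm_cast; lia)
  obtain ⟨K, hK, hsub⟩ := exists_abs_stencilLagEval_sub_le hab r.succ_pos hf'
  obtain ⟨K', hK', hfull⟩ := exists_abs_stencilLagEval_sub_le hab (by lia : 0 < 2 * r) hf'
  obtain ⟨κ, hκ, hweight⟩ := exists_abs_inv_rpow_sub_inv_rpow_le t hA
  refine ⟨(r - 1 : ℕ) * (κ * A * K) + K' + 1, by positivity, ?_⟩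
  intro N x h i y I Q hx hI hII hQ
  have hh : 0 < h := hx.mesh_pos
  have hδ : ∀ k k' : Fin n → ℕ, (∀ q, k q < r) → (∀ q, k' q < r) →
      |((h ^ 2 + I k) ^ t)⁻¹ - ((h ^ 2 + I k') ^ t)⁻¹| ≤
        κ * (A * h ^ (r + 1) / h ^ 2) * ((h ^ 2 + I k') ^ t)⁻¹ := fun k k' hk hk' => by
    have hIk' : 0 ≤ I k' := (hI k' hk').1
    refine (hweight (h ^ 2) (pow_pos hh 2) _ (hI k hk) _ (hI k' hk')).trans ?_
    gcongr
    exact hII k k' hk hk'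
  have hlast : r + (r - 1) = 2 * r - 1 := by lia
  have hindex : ∀ q : Fin n, (0 : Fin n → ℕ) q + (2 * r - 1) + 1 ≤ 2 * r := fun q => by
    rw [Pi.zero_apply]
    lia
  have hrec := hQ.abs_sub_stencilLagEval_le hx (fun k hk => (hI k hk).1) hδ
    (fun l j hl hlr => hsub hx l j hl (by lia) hlr) (d := r - 1) (by lia) (hlast ▸ hindex)
  have hacc := hfull hx (2 * r - 1) 0 (by lia) (by lia) (by lia) hindex
  rw [hlast] at hrec
  calc |Q (2 * r - 1) (fun _ => 0) - f y|
      ≤ (r - 1 : ℕ) * (κ * (A * h ^ (r + 1) / h ^ 2) * (K * h ^ (r + 1))) + K' * h ^ (2 * r) :=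
        (abs_sub_le _ _ _).trans (add_le_add hrec hacc)
    _ = ((r - 1 : ℕ) * (κ * A * K) + K') * h ^ (2 * r) := by
        field_simp
        ring
    _ ≤ ((r - 1 : ℕ) * (κ * A * K) + K' + 1) * h ^ (2 * r) :=
        mul_le_mul_of_nonneg_right (le_add_of_nonneg_right zero_le_one) (by positivity)

theorem stmt14 (n : ℕ) (hn : 1 ≤ n) (r : ℕ) (hr : 2 ≤ r) (t : ℝ) (ht : 0 < t)
    (a b : Fin n → ℝ) (hab : ∀ q, a q < b q)
    (f : (Fin n → ℝ) → ℝ)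
    (hf : ContDiffOn ℝ (2 * n * r) f (Set.univ.pi fun q => Set.Icc (a q) (b q)))
    (A : ℝ) (hA : 0 < A) :
    ∃ B > 0, ∃ h₀ > 0,
      ∀ (N : Fin n → ℕ) (x : Fin n → ℕ → ℝ) (h : ℝ) (i : Fin n → ℕ)
        (xs : Fin n → ℝ) (I : (Fin n → ℕ) → ℝ) (Q : ℕ → (Fin n → ℕ) → ℝ),
        (∀ q, a q ≤ x q 0) → (∀ q, x q (N q) ≤ b q) →
        (∀ q : Fin n, ∀ k k' : ℕ, k < k' → k' ≤ N q → x q k < x q k') →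
        (∀ (q : Fin n) (k : ℕ), 1 ≤ k → k ≤ N q → x q k - x q (k - 1) ≤ h) →
        (∃ (q : Fin n) (k : ℕ), 1 ≤ k ∧ k ≤ N q ∧ x q k - x q (k - 1) = h) →
        h ≤ h₀ →
        (∀ q, r ≤ i q ∧ i q + r ≤ N q + 1) →
        (∀ q, x q (i q - 1) < xs q ∧ xs q < x q (i q)) →
        (∀ k : Fin n → ℕ, (∀ q, k q < r) → 0 ≤ I k ∧ I k ≤ A * h ^ 2) →
        (∀ k k' : Fin n → ℕ, (∀ q, k q < r) → (∀ q, k' q < r) →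
          |I k - I k'| ≤ A * h ^ (r + 1)) →
        (∀ k : Fin n → ℕ, (∀ q, k q < r) →
          Q r k = tensorLagEval n (fun q => Finset.Icc (i q - r + k q) (i q + k q)) x f xs) →
        (∀ (l : ℕ) (j : Fin n → ℕ), r ≤ l → l + 2 ≤ 2 * r → (∀ q, j q + l + 2 ≤ 2 * r) →
          Q (l + 1) j =
            ∑ v ∈ Fintype.piFinset (fun _ : Fin n => ({0, 1} : Finset ℕ)),
              (wenoAlpha n r x i xs h t I l j v /
                  ∑ w ∈ Fintype.piFinset (fun _ : Fin n => ({0, 1} : Finset ℕ)),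
                    wenoAlpha n r x i xs h t I l j w) *
                Q l (fun q => j q + v q)) →
        |Q (2 * r - 1) (fun _ => 0) - f xs| ≤ B * h ^ (2 * r) := by
  obtain ⟨B, hB, hbound⟩ := stmt14_general n r (by lia) t a b hab f
    (Set.pi_univ_Icc a b ▸ hf) A hA.le
  refine ⟨B, hB, 1, one_pos, ?_⟩
  rintro N x h i xs I Q hxa hxb hmono hmesh ⟨q, k, hk, hkN, rfl⟩ _ hi hxs hI hII hinit hstep
  exact hbound N x _ i xs I Q
    { mesh_pos := sub_pos.2 (hmono q _ _ (by lia) hkN)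
      isGrid := fun p => ⟨hxa p, hxb p, fun _ _ k' hk' hlt => hmono p _ k' hlt hk', hmesh p⟩
      le_index := fun p => (hi p).1
      index_add_le := fun p => (hi p).2
      mem_cell := fun p => ⟨(hxs p).1.le, (hxs p).2.le⟩ }
    hI hII ⟨hinit, hstep⟩
end
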